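/- arXiv:1807.00497 — 3 statements merged into one kernel-verified Lean document; each statement's English description precedes it below -/
import Mathlib

section
/- Let ε,b > 0 and let c:(−ε,b) → ℝ^{n+2} be smooth with ⟨c(t),c(t)⟩ = 0, c(t) ≠ 0 and ⟨c′(t),c′(t)⟩ = 1 for all t. Let λ ∈ ℝ∖{0} with 2λ ≤ 1, and let ĉ:(0,b) → ℝ^{n+2} be differentiable with ĉ(t) ≠ 0 and ⟨ĉ(t),ĉ(t)⟩ = 0 for all t, satisfying ĉ′(t) = −(λ/t²)·(⟨c(t),ĉ(t)⟩c′(t) − ⟨c′(t),ĉ(t)⟩c(t)) for all t ∈ (0,b). Then there exist nonzero reals r(t) such that r(t)·ĉ(t) → c(0) as t → 0⁺; that is, the λ-Darboux transform converges projectively to the point ⟨c(0)⟩. -/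
open scoped BigOperators Topology
open Filter Set MeasureTheory

noncomputable section

abbrev E (n : ℕ) := EuclideanSpace ℝ (Fin (n + 2))

/-- Minkowski inner product of signature (n+1,1). -/
def mink {n : ℕ} (x y : E n) : ℝ :=
  ∑ i, (if i = Fin.last (n + 1) then (-1 : ℝ) else 1) * x i * y i

variable {n : ℕ}

lemma mink_comm (x y : E n) : mink x y = mink y x :=
  Finset.sum_congr rfl fun i _ => by ring

lemma mink_add_right (v x y : E n) : mink v (x + y) = mink v x + mink v y := by
  simp [mink, mul_add, Finset.sum_add_distrib]

lemma mink_smul_right (v : E n) (c : ℝ) (x : E n) : mink v (c • x) = c * mink v x := by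
  unfold mink
  rw [Finset.mul_sum]
  refine Finset.sum_congr rfl fun i _ => ?_
  simp only [PiLp.smul_apply, smul_eq_mul]
  ring

lemma mink_add_left (x y v : E n) : mink (x + y) v = mink x v + mink y v := by
  rw [mink_comm, mink_add_right, mink_comm v x, mink_comm v y]

lemma mink_smul_left (c : ℝ) (x v : E n) : mink (c • x) v = c * mink x v := by
  rw [mink_comm, mink_smul_right, mink_comm v x]

/-- `v ∧ w` as an endomorphism: `x ↦ ⟨v,x⟩ w − ⟨w,x⟩ v`. -/
def wedge {n : ℕ} (v w : E n) : E n →L[ℝ] E n :=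
  LinearMap.toContinuousLinearMap
    { toFun := fun x => mink v x • w - mink w x • v
      map_add' := by
        intro x y
        simp only [mink_add_right, add_smul]
        abel
      map_smul' := by
        intro c x
        simp only [mink_smul_right, RingHom.id_apply, mul_smul, smul_sub] }

/-- rank one endomorphism `vw* : x ↦ ⟨x,w⟩ v`. -/
def rankOne {n : ℕ} (v w : E n) : E n →L[ℝ] E n :=
  LinearMap.toContinuousLinearMap
    { toFun := fun x => mink x w • v
      map_add' := by
        intro x y
        simp only [mink_add_left, add_smul]
      map_smul' := by
        intro c x
        simp only [mink_smul_left, RingHom.id_apply, mul_smul] }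


lemma aux_mono {τ : ℝ} {f f' : ℝ → ℝ} (h : ∀ t ∈ Ioo 0 τ, HasDerivAt f (f' t) t)
    (h0 : ∀ t ∈ Ioo 0 τ, 0 ≤ f' t) : MonotoneOn f (Ioo 0 τ) := by
  apply monotoneOn_of_deriv_nonneg (convex_Ioo 0 τ)
  · exact fun t ht => (h t ht).continuousAt.continuousWithinAt
  · rw [interior_Ioo]
    exact fun t ht => (h t ht).differentiableAt.differentiableWithinAt
  · rw [interior_Ioo]
    intro t ht
    rw [(h t ht).deriv]; exact h0 t ht

lemma aux_lim {τ : ℝ} (hτ : 0 < τ) {f : ℝ → ℝ} (h : MonotoneOn f (Ioo 0 τ))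
    (h0 : ∀ t ∈ Ioo 0 τ, 0 ≤ f t) : ∃ L, 0 ≤ L ∧ Tendsto f (𝓝[>] 0) (𝓝 L) := by
  have h1 := h.tendsto_nhdsWithin_Ioo_right ⟨τ/2, by constructor <;> linarith⟩
    ⟨0, by rintro _ ⟨t, ht, rfl⟩; exact h0 t ht⟩
  refine ⟨_, ?_, h1⟩
  apply Real.sInf_nonneg
  rintro _ ⟨t, ht, rfl⟩; exact h0 t ht

lemma ev_Ioo {τ : ℝ} (hτ : 0 < τ) : ∀ᶠ t in 𝓝[>] (0:ℝ), t ∈ Ioo 0 τ :=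
  Ioo_mem_nhdsGT hτ

lemma ev_ex {p : ℝ → Prop} (h : ∀ᶠ t in 𝓝[>] (0:ℝ), p t) : ∃ τ > 0, ∀ t ∈ Ioo 0 τ, p t := by
  obtain ⟨u, hu, h⟩ := mem_nhdsGT_iff_exists_Ioo_subset.1 h
  exact ⟨u, hu, fun t ht => h ht⟩

/-- a log lower bound on the derivative forces divergence -/
lemma aux_log {τ k C : ℝ} (hτ : 0 < τ) (hk : 0 < k) {f f' : ℝ → ℝ}
    (h : ∀ t ∈ Ioo 0 τ, HasDerivAt f (f' t) t)
    (h0 : ∀ t ∈ Ioo 0 τ, k / t - C ≤ f' t) : Tendsto f (𝓝[>] 0) atBot := by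
  have hm : MonotoneOn (fun t => f t - k * Real.log t + C * t) (Ioo 0 τ) := by
    apply aux_mono (f' := fun t => f' t - k * t⁻¹ + C * 1)
    · intro t ht
      exact ((h t ht).sub ((Real.hasDerivAt_log ht.1.ne').const_mul k)).add
        ((hasDerivAt_id t).const_mul C)
    · intro t ht
      have := h0 t ht
      rw [div_eq_mul_inv] at this
      linarith
  have hlog : Tendsto (fun t => k * Real.log t + ((f (τ/2) - k * Real.log (τ/2) + C * (τ/2)) + |C| * τ))
      (𝓝[>] 0) atBot :=
    tendsto_atBot_add_const_right _ _ (Real.tendsto_log_nhdsGT_zero.const_mul_atBot hk)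
  refine tendsto_atBot_mono' _ ?_ hlog
  filter_upwards [ev_Ioo (half_pos hτ)] with t ht
  have h1 := hm ⟨ht.1, by linarith [ht.2]⟩ (⟨by linarith, by linarith⟩ : τ/2 ∈ Ioo 0 τ) ht.2.le
  simp only at h1
  have : -(C * t) ≤ |C| * τ := by
    have h2 : -(C*t) ≤ |C| * t := by
      have := neg_abs_le C
      nlinarith [ht.1]
    have h3 : |C| * t ≤ |C| * τ := by
      have := abs_nonneg C
      have : t ≤ τ := by linarith [ht.2]
      gcongr
    linarith
  linarith

lemma theta_lem {τ k C : ℝ} (hτ : 0 < τ) (hk : 0 < k) (hC : 0 ≤ C) {f f' : ℝ → ℝ}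
    (h : ∀ t ∈ Ioo 0 τ, HasDerivAt f (f' t) t)
    (hf0 : ∀ t ∈ Ioo 0 τ, 0 ≤ f t) (hf1 : ∀ t ∈ Ioo 0 τ, f t ≤ 1)
    (h0 : ∀ t ∈ Ioo 0 τ, k * (f t * (1 - f t)) / t - C ≤ f' t) :
    Tendsto f (𝓝[>] 0) (𝓝 0) ∨ Tendsto f (𝓝[>] 0) (𝓝 1) := by
  have hm : MonotoneOn (fun t => f t + C * t) (Ioo 0 τ) := by
    apply aux_mono (f' := fun t => f' t + C * 1)
    · intro t ht
      exact (h t ht).add ((hasDerivAt_id t).const_mul C)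
    · intro t ht
      have := h0 t ht
      have h2 : 0 ≤ k * (f t * (1 - f t)) / t := by
        have := hf0 t ht
        have := sub_nonneg.2 (hf1 t ht)
        have := ht.1
        positivity
      linarith
  obtain ⟨L, hL, hlim⟩ := aux_lim hτ hm (fun t ht => by
    have := hf0 t ht
    have := ht.1
    positivity)
  have hCt : Tendsto (fun t : ℝ => C * t) (𝓝[>] 0) (𝓝 0) := by
    have : Tendsto (fun t : ℝ => C * t) (𝓝 0) (𝓝 (C * 0)) := (continuous_const.mul continuous_id).tendsto 0
    rw [mul_zero] at this
    exact this.mono_left nhdsWithin_le_nhds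
  have hf : Tendsto f (𝓝[>] 0) (𝓝 L) := by
    have := hlim.sub hCt
    simpa using this
  have hL1 : L ≤ 1 := le_of_tendsto hf (by filter_upwards [ev_Ioo hτ] with t ht using hf1 t ht)
  rcases hL.eq_or_lt with rfl | hL0
  · exact Or.inl hf
  rcases hL1.eq_or_lt with rfl | hL1
  · exact Or.inr hf
  exfalso
  have hg : Tendsto (fun t => f t * (1 - f t)) (𝓝[>] 0) (𝓝 (L * (1 - L))) :=
    hf.mul (tendsto_const_nhds.sub hf)
  have hp : 0 < L * (1 - L) := mul_pos hL0 (by linarith)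
  have hev := hg.eventually (lt_mem_nhds (half_lt_self hp))
  obtain ⟨τ', hτ', h'⟩ := ev_ex (hev.and (ev_Ioo hτ))
  have hbot := aux_log (f := f) (f' := f') (k := k * (L * (1-L)/2)) (C := C) hτ' (by positivity)
    (fun t ht => h t (h' t ht).2) (fun t ht => by
      refine le_trans ?_ (h0 t (h' t ht).2)
      have h1 := (h' t ht).1.le
      have := ht.1
      gcongr)
  exact not_tendsto_atBot_of_tendsto_nhds hf hbot

lemma quad_nonneg {X Y Z p q r : ℝ} (hX : 0 ≤ X) (hZ : 0 ≤ Z) (hY : Y^2 ≤ 2*X*Z)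
    (hp : 0 ≤ p) (hq : 0 ≤ q) (hr : r^2 ≤ 2*p*q) : 0 ≤ p*Z + q*X + r*Y := by
  have h1 : (r*Y)^2 ≤ (p*Z+q*X)^2 := by
    have h2 : (r*Y)^2 ≤ (2*p*q)*(2*X*Z) := by
      rw [mul_pow]; gcongr
    nlinarith [sq_nonneg (p*Z-q*X)]
  have := abs_le_of_sq_le_sq' h1 (by positivity)
  linarith [this.1]

lemma end_lem {a : ℝ} (ha : a ≠ 0) {X Y Z : ℝ → ℝ} {τ : ℝ} (hτ : 0 < τ)
    (hX : ∀ t ∈ Ioo 0 τ, 0 ≤ X t) (hZ : ∀ t ∈ Ioo 0 τ, 0 ≤ Z t)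
    (hXZ : ∀ t ∈ Ioo 0 τ, 0 < X t + Z t)
    (hY : ∀ t ∈ Ioo 0 τ, (Y t)^2 ≤ 2 * X t * Z t)
    (h : Tendsto (fun t => (Z t - a * Y t + a^2/2 * X t) / (X t + Z t)) (𝓝[>] 0) (𝓝 0)) :
    ∃ δ > 0, ∀ᶠ t in 𝓝[>] (0:ℝ), δ * X t ≤ Z t := by
  have ha2 : 0 < a^2 := by positivity
  refine ⟨(a^2/4)/(2+a^2/4), by positivity, ?_⟩
  filter_upwards [h.eventually (gt_mem_nhds (show (0:ℝ) < a^2/8 by positivity)), ev_Ioo hτ] with t h1 ht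
  rw [div_lt_iff₀ (hXZ t ht)] at h1
  have h2 := quad_nonneg (p := 4) (q := a^2/2) (r := -2*a) (hX t ht) (hZ t ht) (hY t ht)
    (by norm_num) (by positivity) (by nlinarith)
  rw [div_mul_eq_mul_div, div_le_iff₀ (by positivity)]
  nlinarith

lemma ode_pos {lam μ C τ : ℝ} (hμ : 0 < μ) (hμ2 : μ^2 = 1 - 2*lam) (hlam : lam ≠ 0) (hC : 0 ≤ C)
    (hτ : 0 < τ) {X Y Z e1 e2 : ℝ → ℝ}
    (hX : ∀ t ∈ Ioo 0 τ, 0 ≤ X t) (hZ : ∀ t ∈ Ioo 0 τ, 0 ≤ Z t)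
    (hXZ : ∀ t ∈ Ioo 0 τ, 0 < X t + Z t)
    (hY : ∀ t ∈ Ioo 0 τ, (Y t)^2 ≤ 2 * X t * Z t)
    (dX : ∀ t ∈ Ioo 0 τ, HasDerivAt X ((Y t - X t)/t) t)
    (dY : ∀ t ∈ Ioo 0 τ, HasDerivAt Y ((Z t - lam * X t)/t + e1 t) t)
    (dZ : ∀ t ∈ Ioo 0 τ, HasDerivAt Z ((Z t - lam * Y t)/t + e2 t) t)
    (he1 : ∀ t ∈ Ioo 0 τ, |e1 t| ≤ C * (X t + Z t))
    (he2 : ∀ t ∈ Ioo 0 τ, |e2 t| ≤ C * (X t + Z t)) :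
    ∃ δ > 0, ∀ᶠ t in 𝓝[>] (0:ℝ), δ * X t ≤ Z t := by
  set c : ℝ := 2*μ^2/(3+μ^2) with hc
  have hc0 : 0 < c := by positivity
  have hcm : c * (3+μ^2) = 2*μ^2 := by rw [hc]; field_simp
  have hc2 : c ≤ 2 := by nlinarith
  have hc3 : c ≤ 1 + μ^2 := by nlinarith
  obtain ⟨A, hA⟩ : ∃ A : ℝ → ℝ, A = fun t => Z t - (1-μ) * Y t + (1-μ)^2/2 * X t := ⟨_, rfl⟩
  obtain ⟨B, hB⟩ : ∃ B : ℝ → ℝ, B = fun t => Z t - (1+μ) * Y t + (1+μ)^2/2 * X t := ⟨_, rfl⟩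
  have hAn : ∀ t ∈ Ioo 0 τ, 0 ≤ A t := by
    intro t ht
    have := quad_nonneg (p := 1) (q := (1-μ)^2/2) (r := -(1-μ)) (hX t ht) (hZ t ht) (hY t ht)
      (by norm_num) (by positivity) (by nlinarith)
    rw [hA]; linarith
  have hBn : ∀ t ∈ Ioo 0 τ, 0 ≤ B t := by
    intro t ht
    have := quad_nonneg (p := 1) (q := (1+μ)^2/2) (r := -(1+μ)) (hX t ht) (hZ t ht) (hY t ht)
      (by norm_num) (by positivity) (by nlinarith)
    rw [hB]; linarith
  have hAB : ∀ t ∈ Ioo 0 τ, c * (X t + Z t) ≤ A t + B t := by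
    intro t ht
    have := quad_nonneg (p := 2 - c) (q := 1 + μ^2 - c) (r := -2) (hX t ht) (hZ t ht) (hY t ht)
      (by linarith) (by linarith) (by nlinarith)
    rw [hA, hB]; simp only; linarith
  -- upper bound
  obtain ⟨K, hK0, hK⟩ : ∃ K > 0, ∀ t ∈ Ioo 0 τ, A t + B t ≤ K * (X t + Z t) := by
    refine ⟨4 + μ^2, by positivity, fun t ht => ?_⟩
    have := quad_nonneg (p := 2 + μ^2) (q := 3) (r := 2) (hX t ht) (hZ t ht) (hY t ht)
      (by positivity) (by norm_num) (by nlinarith)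
    rw [hA, hB]; simp only; linarith
  have hABp : ∀ t ∈ Ioo 0 τ, 0 < A t + B t := fun t ht =>
    lt_of_lt_of_le (mul_pos hc0 (hXZ t ht)) (hAB t ht)
  have dA : ∀ t ∈ Ioo 0 τ, HasDerivAt A (μ * A t / t + (e2 t - (1-μ) * e1 t)) t := by
    intro t ht
    have ht0 := ht.1.ne'
    have := ((dZ t ht).sub ((dY t ht).const_mul (1-μ))).add ((dX t ht).const_mul ((1-μ)^2/2))
    rw [hA]
    refine this.congr_deriv ?_
    have hl : lam = (1 - μ^2)/2 := by linarith
    rw [hl]; field_simp; ring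
  have dB : ∀ t ∈ Ioo 0 τ, HasDerivAt B (-μ * B t / t + (e2 t - (1+μ) * e1 t)) t := by
    intro t ht
    have ht0 := ht.1.ne'
    have := ((dZ t ht).sub ((dY t ht).const_mul (1+μ))).add ((dX t ht).const_mul ((1+μ)^2/2))
    rw [hB]
    refine this.congr_deriv ?_
    have hl : lam = (1 - μ^2)/2 := by linarith
    rw [hl]; field_simp; ring
  have he : ∀ t ∈ Ioo 0 τ, ∀ s : ℝ, |s| ≤ 1 + μ →
      |e2 t - s * e1 t| ≤ (2+μ) * C / c * (A t + B t) := by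
    intro t ht s hs
    have h1 : |e2 t - s * e1 t| ≤ (2 + μ) * C * (X t + Z t) := by
      calc |e2 t - s * e1 t| ≤ |e2 t| + |s * e1 t| := abs_sub _ _
        _ ≤ C * (X t + Z t) + (1+μ) * (C * (X t + Z t)) := by
          rw [abs_mul]
          have := he1 t ht
          have := he2 t ht
          gcongr
        _ = _ := by ring
    refine h1.trans ?_
    have := hAB t ht
    calc (2 + μ) * C * (X t + Z t) = (2+μ) * C / c * (c * (X t + Z t)) := by field_simp
      _ ≤ _ := by gcongr
  have hth := theta_lem (τ := τ) (k := 2*μ) (C := 2 * ((2+μ) * C / c)) hτ (by positivity)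
    (by positivity) (f := fun t => A t / (A t + B t))
    (fun t ht => (dA t ht).div ((dA t ht).add (dB t ht)) (hABp t ht).ne')
    (fun t ht => div_nonneg (hAn t ht) (hABp t ht).le)
    (fun t ht => by rw [div_le_one (hABp t ht)]; linarith [hBn t ht])
    (fun t ht => by
      have hp := hABp t ht
      have ht0 := ht.1
      have h1 := he t ht (1-μ) (by rw [abs_le]; constructor <;> linarith)
      have h2 := he t ht (1+μ) (by rw [abs_of_pos]; linarith)
      have hAt := hAn t ht
      have hBt := hBn t ht
      generalize e2 t - (1-μ) * e1 t = E1 at *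
      generalize e2 t - (1+μ) * e1 t = E2 at *
      generalize (2+μ) * C / c = D at *
      generalize A t = a at *
      generalize B t = b at *
      have key : ((μ * a / t + E1) * (a + b) - a * (μ * a / t + E1 + (-μ * b / t + E2))) / (a+b)^2
        = 2*μ * (a/(a+b) * (1 - a/(a+b))) / t + (b * E1 - a * E2)/(a+b)^2 := by
        field_simp; ring
      rw [key]
      have : -(2*D) ≤ (b * E1 - a * E2)/(a+b)^2 := by
        rw [le_div_iff₀ (by positivity)]
        have := abs_le.1 h1
        have := abs_le.1 h2
        have hD : 0 ≤ D * (a + b) := (abs_nonneg _).trans h1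
        nlinarith
      linarith)
  have conv : ∀ F : ℝ → ℝ, (∀ t ∈ Ioo 0 τ, 0 ≤ F t) →
      Tendsto (fun t => F t / (A t + B t)) (𝓝[>] 0) (𝓝 0) →
      Tendsto (fun t => F t / (X t + Z t)) (𝓝[>] 0) (𝓝 0) := by
    intro F hF h
    have h2 := h.const_mul K
    rw [mul_zero] at h2
    refine tendsto_of_tendsto_of_tendsto_of_le_of_le' tendsto_const_nhds h2 ?_ ?_
    · filter_upwards [ev_Ioo hτ] with t ht using div_nonneg (hF t ht) (hXZ t ht).le
    · filter_upwards [ev_Ioo hτ] with t ht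
      have h3 := hABp t ht
      have h4 := hXZ t ht
      rw [div_le_iff₀ h4, mul_div_assoc', div_mul_eq_mul_div, le_div_iff₀ h3]
      nlinarith [hF t ht, hK t ht]
  rcases hth with h | h
  · refine end_lem (a := 1 - μ) ?_ hτ hX hZ hXZ hY ?_
    · intro h0
      apply hlam
      have : μ = 1 := by linarith
      rw [this] at hμ2; linarith
    · have := conv A hAn h
      rwa [hA] at this
  · refine end_lem (a := 1 + μ) (by positivity) hτ hX hZ hXZ hY ?_
    have h' : Tendsto (fun t => B t / (A t + B t)) (𝓝[>] 0) (𝓝 0) := by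
      have h2 : Tendsto (fun t => 1 - A t / (A t + B t)) (𝓝[>] 0) (𝓝 (1-1)) :=
        tendsto_const_nhds.sub h
      rw [sub_self] at h2
      refine h2.congr' ?_
      filter_upwards [ev_Ioo hτ] with t ht
      have h3 := (hABp t ht).ne'
      field_simp; ring
    have := conv B hBn h'
    rwa [hB] at this

lemma ode_zero {C τ : ℝ} (hC : 0 ≤ C)
    (hτ : 0 < τ) {X Y Z e1 e2 : ℝ → ℝ}
    (hX : ∀ t ∈ Ioo 0 τ, 0 ≤ X t) (hZ : ∀ t ∈ Ioo 0 τ, 0 ≤ Z t)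
    (hXZ : ∀ t ∈ Ioo 0 τ, 0 < X t + Z t)
    (hY : ∀ t ∈ Ioo 0 τ, (Y t)^2 ≤ 2 * X t * Z t)
    (dX : ∀ t ∈ Ioo 0 τ, HasDerivAt X ((Y t - X t)/t) t)
    (dY : ∀ t ∈ Ioo 0 τ, HasDerivAt Y ((Z t - 1/2 * X t)/t + e1 t) t)
    (dZ : ∀ t ∈ Ioo 0 τ, HasDerivAt Z ((Z t - 1/2 * Y t)/t + e2 t) t)
    (he1 : ∀ t ∈ Ioo 0 τ, |e1 t| ≤ C * (X t + Z t))
    (he2 : ∀ t ∈ Ioo 0 τ, |e2 t| ≤ C * (X t + Z t)) :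
    ∃ δ > 0, ∀ᶠ t in 𝓝[>] (0:ℝ), δ * X t ≤ Z t := by
  obtain ⟨A, hA⟩ : ∃ A : ℝ → ℝ, A = fun t => Z t - Y t + 1/2 * X t := ⟨_, rfl⟩
  obtain ⟨P, hP⟩ : ∃ P : ℝ → ℝ, P = fun t => Y t - X t := ⟨_, rfl⟩
  obtain ⟨N, hN⟩ : ∃ N : ℝ → ℝ, N = fun t => 32 * A t + X t := ⟨_, rfl⟩
  have hAn : ∀ t ∈ Ioo 0 τ, 0 ≤ A t := by
    intro t ht
    have := quad_nonneg (p := 1) (q := 1/2) (r := -1) (hX t ht) (hZ t ht) (hY t ht)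
      (by norm_num) (by positivity) (by norm_num)
    rw [hA]; simp only; linarith
  have hPA : ∀ t ∈ Ioo 0 τ, (P t)^2 ≤ 2 * X t * A t := by
    intro t ht
    have := hY t ht
    rw [hA, hP]; simp only; nlinarith
  have hPN : ∀ t ∈ Ioo 0 τ, |P t| ≤ N t / 8 := by
    intro t ht
    apply abs_le_of_sq_le_sq
    · have := hPA t ht
      rw [hN]; simp only
      nlinarith [sq_nonneg (32 * A t - X t)]
    · rw [hN]; simp only
      linarith [hAn t ht, hX t ht]
  have hXZN : ∀ t ∈ Ioo 0 τ, X t + Z t ≤ 2 * N t := by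
    intro t ht
    have h1 := (abs_le.1 (hPN t ht)).2
    have h2 := hAn t ht
    have h3 := hX t ht
    have : Z t = A t + P t + 1/2 * X t := by rw [hA, hP]; simp only; ring
    have : N t = 32 * A t + X t := by rw [hN]
    linarith
  have hNp : ∀ t ∈ Ioo 0 τ, 0 < N t := fun t ht => by
    linarith [hXZ t ht, hXZN t ht]
  have dA : ∀ t ∈ Ioo 0 τ, HasDerivAt A (e2 t - e1 t) t := by
    intro t ht
    have ht0 := ht.1.ne'
    have := ((dZ t ht).sub (dY t ht)).add ((dX t ht).const_mul (1/2))
    rw [hA]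
    refine this.congr_deriv ?_
    field_simp; ring
  have dP : ∀ t ∈ Ioo 0 τ, HasDerivAt P (A t / t + e1 t) t := by
    intro t ht
    have ht0 := ht.1.ne'
    have := (dY t ht).sub (dX t ht)
    rw [hP]
    refine this.congr_deriv ?_
    rw [hA]; field_simp; ring
  have dN : ∀ t ∈ Ioo 0 τ, HasDerivAt N (32 * (e2 t - e1 t) + P t / t) t := by
    intro t ht
    rw [hN]
    refine (((dA t ht).const_mul 32).add (dX t ht)).congr_deriv ?_
    rw [hP]
  have hE1 : ∀ t ∈ Ioo 0 τ, |e1 t| ≤ 2 * C * N t := fun t ht => by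
    have := hXZN t ht
    calc |e1 t| ≤ C * (X t + Z t) := he1 t ht
      _ ≤ C * (2 * N t) := by gcongr
      _ = _ := by ring
  have hE : ∀ t ∈ Ioo 0 τ, |e2 t - e1 t| ≤ 4 * C * N t := fun t ht => by
    have h1 := hXZN t ht
    calc |e2 t - e1 t| ≤ |e2 t| + |e1 t| := abs_sub _ _
      _ ≤ C * (X t + Z t) + C * (X t + Z t) := add_le_add (he2 t ht) (he1 t ht)
      _ ≤ C * (2 * N t) + C * (2 * N t) := by gcongr
      _ = _ := by ring
  obtain ⟨σ, hσ0, hστ, hσC⟩ : ∃ σ > 0, σ ≤ τ ∧ 1024 * C * σ ≤ 1 := by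
    refine ⟨min τ (1/(1024*(C+1))), by positivity, min_le_left _ _, ?_⟩
    calc 1024 * C * min τ (1/(1024*(C+1))) ≤ 1024 * C * (1/(1024*(C+1))) := by
          gcongr; exact min_le_right _ _
      _ ≤ 1 := by rw [mul_one_div, div_le_one (by positivity)]; linarith
  have sub : ∀ t ∈ Ioo 0 σ, t ∈ Ioo 0 τ := fun t ht => ⟨ht.1, ht.2.trans_le hστ⟩
  have hN' : ∀ t ∈ Ioo 0 σ, |32 * (e2 t - e1 t) + P t / t| ≤ N t / (4 * t) := by
    intro t ht
    have h1 := hE t (sub t ht)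
    have h2 := hPN t (sub t ht)
    have h3 := hNp t (sub t ht)
    have ht0 := ht.1
    calc |32 * (e2 t - e1 t) + P t / t| ≤ |32 * (e2 t - e1 t)| + |P t / t| := abs_add_le _ _
      _ = 32 * |e2 t - e1 t| + |P t| / t := by
        rw [abs_mul, abs_div, abs_of_pos ht0, abs_of_pos (by norm_num : (0:ℝ) < 32)]
      _ ≤ 32 * (4 * C * N t) + (N t / 8) / t := by gcongr
      _ ≤ N t / (8 * t) + (N t / 8) / t := by
        gcongr
        rw [le_div_iff₀ (by positivity)]
        have : 1024 * C * t ≤ 1 := le_trans (by gcongr; exact ht.2.le) hσC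
        nlinarith
      _ = _ := by field_simp; norm_num
  obtain ⟨w, hw⟩ : ∃ w : ℝ → ℝ, w = fun t => t ^ (1/4:ℝ) := ⟨_, rfl⟩
  have w0 : ∀ t ∈ Ioo 0 σ, 0 < w t := fun t ht => by rw [hw]; exact Real.rpow_pos_of_pos ht.1 _
  have w4 : ∀ t ∈ Ioo 0 σ, (w t)^4 = t := fun t ht => by
    rw [hw]; simp only
    rw [← Real.rpow_natCast, ← Real.rpow_mul ht.1.le]; norm_num
  have dw : ∀ t ∈ Ioo 0 σ, HasDerivAt w (w t / (4 * t)) t := fun t ht => by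
    rw [hw]
    refine (Real.hasDerivAt_rpow_const (Or.inl ht.1.ne')).congr_deriv ?_
    rw [Real.rpow_sub_one ht.1.ne']; ring
  have wlim : Tendsto w (𝓝[>] 0) (𝓝 0) := by
    have : ContinuousAt w 0 := by
      rw [hw]; exact Real.continuousAt_rpow_const 0 _ (Or.inr (by norm_num))
    have h := this.tendsto
    rw [show w 0 = 0 by rw [hw]; simp] at h
    exact h.mono_left nhdsWithin_le_nhds
  have m1 : MonotoneOn (fun t => N t * w t) (Ioo 0 σ) := by
    apply aux_mono (fun t ht => (dN t (sub t ht)).mul (dw t ht))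
    intro t ht
    have h1 := (abs_le.1 (hN' t ht)).1
    have h2 := w0 t ht
    have : N t * (w t / (4*t)) = N t / (4*t) * w t := by ring
    rw [this, ← add_mul]
    apply mul_nonneg _ h2.le
    linarith
  have m2 : MonotoneOn (fun t => -(N t / w t)) (Ioo 0 σ) := by
    apply aux_mono (fun t ht => ((dN t (sub t ht)).div (dw t ht) (w0 t ht).ne').neg)
    intro t ht
    have h1 := (abs_le.1 (hN' t ht)).2
    have h2 := w0 t ht
    rw [← neg_div]
    apply div_nonneg _ (by positivity)
    have : N t * (w t / (4*t)) = N t / (4*t) * w t := by ring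
    rw [this]
    nlinarith
  have hs : σ/2 ∈ Ioo 0 σ := ⟨by linarith, by linarith⟩
  obtain ⟨M, hM0, hM⟩ : ∃ M > 0, ∀ t ∈ Ioo 0 (σ/2), N t * w t ≤ M :=
    ⟨_, mul_pos (hNp _ (sub _ hs)) (w0 _ hs), fun t ht => m1 ⟨ht.1, ht.2.trans hs.2⟩ hs ht.2.le⟩
  obtain ⟨m, hm0, hm⟩ : ∃ m > 0, ∀ t ∈ Ioo 0 (σ/2), m ≤ N t / w t :=
    ⟨_, div_pos (hNp _ (sub _ hs)) (w0 _ hs), fun t ht =>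
      neg_le_neg_iff.1 (m2 ⟨ht.1, ht.2.trans hs.2⟩ hs ht.2.le)⟩
  have sub2 : ∀ t ∈ Ioo 0 (σ/2), t ∈ Ioo 0 σ := fun t ht => ⟨ht.1, ht.2.trans hs.2⟩
  obtain ⟨D, hD⟩ : ∃ D, D = 4/3 * (4 * C * M) := ⟨_, rfl⟩
  have dw3 : ∀ t ∈ Ioo 0 σ, HasDerivAt (fun t => (w t)^3) (3/4 / w t) t := fun t ht => by
    refine ((dw t ht).pow 3).congr_deriv ?_
    have h2 := w0 t ht
    have h4 := w4 t ht
    have ht0 := ht.1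
    push_cast
    field_simp
    norm_num
    linarith
  have hNM : ∀ t ∈ Ioo 0 (σ/2), N t ≤ M / w t := fun t ht => by
    rw [le_div_iff₀ (w0 t (sub2 t ht))]; exact hM t ht
  have hA' : ∀ t ∈ Ioo 0 (σ/2), |e2 t - e1 t| ≤ D * (3/4 / w t) := by
    intro t ht
    calc _ ≤ 4 * C * N t := hE t (sub _ (sub2 t ht))
      _ ≤ 4 * C * (M / w t) := by gcongr; exact hNM t ht
      _ = _ := by rw [hD]; ring
  have a1 : MonotoneOn (fun t => A t + D * (w t)^3) (Ioo 0 (σ/2)) := by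
    apply aux_mono (fun t ht => (dA t (sub _ (sub2 t ht))).add ((dw3 t (sub2 t ht)).const_mul D))
    intro t ht
    linarith [(abs_le.1 (hA' t ht)).1]
  have a2 : MonotoneOn (fun t => D * (w t)^3 - A t) (Ioo 0 (σ/2)) := by
    apply aux_mono (fun t ht => ((dw3 t (sub2 t ht)).const_mul D).sub (dA t (sub _ (sub2 t ht))))
    intro t ht
    linarith [(abs_le.1 (hA' t ht)).2]
  have hσ2 : 0 < σ/2 := by linarith
  have hD0 : 0 ≤ D := by rw [hD]; positivity
  obtain ⟨A0, hA0, hlim⟩ := aux_lim hσ2 a1 (fun t ht => by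
    have := hAn t (sub _ (sub2 t ht))
    have := w0 t (sub2 t ht)
    positivity)
  have w3lim : Tendsto (fun t => D * (w t)^3) (𝓝[>] 0) (𝓝 0) := by
    simpa using (wlim.pow 3).const_mul D
  have Alim : Tendsto A (𝓝[>] 0) (𝓝 A0) := by simpa using hlim.sub w3lim
  refine end_lem (a := 1) one_ne_zero hτ hX hZ hXZ hY ?_
  have hAe : (fun t => (Z t - 1 * Y t + 1^2/2 * X t) / (X t + Z t)) = fun t => A t / (X t + Z t) := by
    rw [hA]; simp
  rw [hAe]
  have hNX : ∀ t ∈ Ioo 0 τ, N t ≤ 64 * (X t + Z t) := by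
    intro t ht
    have := quad_nonneg (p := 32) (q := 47) (r := 32) (hX t ht) (hZ t ht) (hY t ht)
      (by norm_num) (by positivity) (by norm_num)
    rw [hN, hA]; simp only; linarith
  rcases hA0.eq_or_lt with rfl | hA0
  · have hAb : ∀ t ∈ Ioo 0 (σ/2), A t ≤ D * (w t)^3 := by
      intro t ht
      have h1 : Tendsto (fun t => D * (w t)^3 - A t) (𝓝[>] 0) (𝓝 0) := by
        simpa using w3lim.sub Alim
      have := le_of_tendsto h1 (b := D * (w t)^3 - A t) (by
        filter_upwards [ev_Ioo ht.1] with s hs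
        exact a2 ⟨hs.1, hs.2.trans ht.2⟩ ht hs.2.le)
      linarith
    have h2 : Tendsto (fun t => 64 * D / m * (w t)^2) (𝓝[>] 0) (𝓝 0) := by
      simpa using (wlim.pow 2).const_mul (64 * D/m)
    refine tendsto_of_tendsto_of_tendsto_of_le_of_le' tendsto_const_nhds h2 ?_ ?_
    · filter_upwards [ev_Ioo hτ] with t ht using div_nonneg (hAn t ht) (hXZ t ht).le
    · filter_upwards [ev_Ioo hσ2] with t ht
      have h3 := hXZ t (sub _ (sub2 t ht))
      have h4 := w0 t (sub2 t ht)
      have h5 := hm t ht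
      rw [le_div_iff₀ h4] at h5
      have h6 := hNX t (sub _ (sub2 t ht))
      rw [div_le_iff₀ h3]
      calc A t ≤ D * (w t)^3 := hAb t ht
        _ = D / m * (w t)^2 * (m * w t) := by field_simp
        _ ≤ D / m * (w t)^2 * (64 * (X t + Z t)) :=
          mul_le_mul_of_nonneg_left (h5.trans h6) (by positivity)
        _ = _ := by ring
  · have hPbot : Tendsto P (𝓝[>] 0) atBot := by
      have hev := (Alim.eventually (lt_mem_nhds (half_lt_self hA0))).and (ev_Ioo hσ2)
      obtain ⟨ρ, hρ, h'⟩ := ev_ex hev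
      have dQ : ∀ t ∈ Ioo 0 ρ, HasDerivAt (fun t => P t + D * (w t)^3)
          (A t / t + e1 t + D * (3/4 / w t)) t := fun t ht =>
        (dP t (sub _ (sub2 t (h' t ht).2))).add ((dw3 t (sub2 t (h' t ht).2)).const_mul D)
      have := aux_log (k := A0/2) (C := 0) hρ (by linarith) dQ (fun t ht => by
        have h1 := (h' t ht).1.le
        have ht0 := ht.1
        have h2 := (h' t ht).2
        have h3 : |e1 t| ≤ D * (3/4 / w t) := by
          have hn := hNp t (sub _ (sub2 t h2))
          calc _ ≤ 2 * C * N t := hE1 t (sub _ (sub2 t h2))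
            _ ≤ 4 * C * N t := by gcongr; norm_num
            _ ≤ 4 * C * (M / w t) := by gcongr; exact hNM t h2
            _ = _ := by rw [hD]; ring
        have h4 := (abs_le.1 h3).1
        have h5 : A0 / 2 / t ≤ A t / t := by gcongr
        linarith)
      refine tendsto_atBot_mono' _ ?_ this
      filter_upwards [ev_Ioo hσ0] with t ht
      have := w0 t ht
      have : 0 ≤ D * (w t)^3 := by positivity
      linarith
    have hP2 : Tendsto (fun t => 2 * (A t)^2 * ((P t)⁻¹)^2) (𝓝[>] 0) (𝓝 0) := by
      have h1 := hPbot.inv_tendsto_atBot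
      simpa using ((Alim.pow 2).const_mul 2).mul (h1.pow 2)
    refine tendsto_of_tendsto_of_tendsto_of_le_of_le' tendsto_const_nhds hP2 ?_ ?_
    · filter_upwards [ev_Ioo hτ] with t ht using div_nonneg (hAn t ht) (hXZ t ht).le
    · filter_upwards [ev_Ioo hτ, hPbot.eventually (eventually_lt_atBot 0)] with t ht hPt
      have h3 := hXZ t ht
      have h4 := hPA t ht
      have h5 := hAn t ht
      have h6 := hZ t ht
      have h7 : 0 < (P t)^2 := by nlinarith
      rw [div_le_iff₀ h3, inv_pow, ← div_eq_mul_inv, div_mul_eq_mul_div, le_div_iff₀ h7]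
      nlinarith [mul_nonneg (mul_nonneg h5 h5) h6, mul_le_mul_of_nonneg_left h4 h5]

lemma ode_main {lam C τ : ℝ} (hlam : lam ≠ 0) (hlam2 : 2*lam ≤ 1) (hC : 0 ≤ C)
    (hτ : 0 < τ) {X Y Z e1 e2 : ℝ → ℝ}
    (hX : ∀ t ∈ Ioo 0 τ, 0 ≤ X t) (hZ : ∀ t ∈ Ioo 0 τ, 0 ≤ Z t)
    (hXZ : ∀ t ∈ Ioo 0 τ, 0 < X t + Z t)
    (hY : ∀ t ∈ Ioo 0 τ, (Y t)^2 ≤ 2 * X t * Z t)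
    (dX : ∀ t ∈ Ioo 0 τ, HasDerivAt X ((Y t - X t)/t) t)
    (dY : ∀ t ∈ Ioo 0 τ, HasDerivAt Y ((Z t - lam * X t)/t + e1 t) t)
    (dZ : ∀ t ∈ Ioo 0 τ, HasDerivAt Z ((Z t - lam * Y t)/t + e2 t) t)
    (he1 : ∀ t ∈ Ioo 0 τ, |e1 t| ≤ C * (X t + Z t))
    (he2 : ∀ t ∈ Ioo 0 τ, |e2 t| ≤ C * (X t + Z t)) :
    ∃ δ > 0, ∀ᶠ t in 𝓝[>] (0:ℝ), δ * X t ≤ Z t := by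
  rcases hlam2.eq_or_lt with h | h
  · have : lam = 1/2 := by linarith
    subst this
    exact ode_zero hC hτ hX hZ hXZ hY dX dY dZ he1 he2
  · exact ode_pos (μ := Real.sqrt (1 - 2*lam)) (Real.sqrt_pos.2 (by linarith))
      (Real.sq_sqrt (by linarith)) hlam hC hτ hX hZ hXZ hY dX dY dZ he1 he2

lemma mink_sub_right (v x y : E n) : mink v (x - y) = mink v x - mink v y := by
  rw [sub_eq_add_neg, mink_add_right, ← neg_one_smul ℝ y, mink_smul_right]; ring

lemma mink_sub_left (v x y : E n) : mink (x - y) v = mink x v - mink y v := by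
  rw [mink_comm, mink_sub_right, mink_comm v x, mink_comm v y]

lemma mink_abs_le (x y : E n) : |mink x y| ≤ ‖x‖ * ‖y‖ := by
  apply abs_le_of_sq_le_sq _ (by positivity)
  rw [mul_pow, EuclideanSpace.norm_sq_eq, EuclideanSpace.norm_sq_eq]
  unfold mink
  refine (Finset.sum_mul_sq_le_sq_mul_sq _ _ _).trans ?_
  apply le_of_eq
  congr 1
  · refine Finset.sum_congr rfl fun i _ => ?_
    split_ifs <;> simp
  · refine Finset.sum_congr rfl fun i _ => ?_
    simp

lemma timelike_bound (v w : E n) (hv : mink v v = -2) (hw : mink w v = 0) :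
    ‖w‖^2 ≤ ‖v‖^2 * mink w w := by
  rw [EuclideanSpace.norm_sq_eq, EuclideanSpace.norm_sq_eq]
  simp only [mink, Fin.sum_univ_castSucc (n := n+1), Real.norm_eq_abs, sq_abs] at *
  simp only [if_true, (Fin.castSucc_lt_last _).ne, if_false, one_mul, ← pow_two] at *
  have e1 : ∀ x : ℝ, -1 * x * x = - x^2 := fun x => by ring
  simp only [e1] at hv hw ⊢
  have hcs := Finset.sum_mul_sq_le_sq_mul_sq Finset.univ
    (fun i : Fin (n+1) => w i.castSucc) (fun i => v i.castSucc)
  generalize hS : ∑ i : Fin (n+1), w i.castSucc * v i.castSucc = S at *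
  generalize hV : ∑ i : Fin (n+1), v i.castSucc ^ 2 = V at *
  generalize hW : ∑ i : Fin (n+1), w i.castSucc ^ 2 = W at *
  have hV0 : 0 ≤ V := hV ▸ Finset.sum_nonneg fun i _ => sq_nonneg _
  have hW0 : 0 ≤ W := hW ▸ Finset.sum_nonneg fun i _ => sq_nonneg _
  generalize v (Fin.last (n+1)) = a at *
  generalize w (Fin.last (n+1)) = b at *
  have hSa : S = b * a := by linarith
  rw [hSa] at hcs
  have ha : a^2 = V + 2 := by linarith
  rw [mul_pow, ha] at hcs
  rw [ha]
  have hb : b^2 ≤ W := by nlinarith [sq_nonneg b]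
  nlinarith [mul_nonneg hV0 (sub_nonneg.2 hb)]

lemma HasDerivAt.mink' {f g : ℝ → E n} {f' g' : E n} {t : ℝ} (hf : HasDerivAt f f' t)
    (hg : HasDerivAt g g' t) :
    HasDerivAt (fun s => mink (f s) (g s)) (mink f' (g t) + mink (f t) g') t := by
  unfold mink
  rw [← Finset.sum_add_distrib]
  apply HasDerivAt.fun_sum
  intro i _
  have h1 : HasDerivAt (fun s => f s i) (f' i) t :=
    (EuclideanSpace.proj (𝕜 := ℝ) i).hasFDerivAt.comp_hasDerivAt t hf
  have h2 : HasDerivAt (fun s => g s i) (g' i) t :=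
    (EuclideanSpace.proj (𝕜 := ℝ) i).hasFDerivAt.comp_hasDerivAt t hg
  exact (h1.const_mul _).mul h2

lemma contDiffOn_mink {m : WithTop ℕ∞} {f g : ℝ → E n} {s : Set ℝ} (hf : ContDiffOn ℝ m f s)
    (hg : ContDiffOn ℝ m g s) : ContDiffOn ℝ m (fun t => mink (f t) (g t)) s := by
  unfold mink
  apply ContDiffOn.sum
  intro i _
  have h1 := contDiffOn_euclidean.1 hf i
  have h2 := contDiffOn_euclidean.1 hg i
  exact (contDiffOn_const.mul h1).mul h2

/-- if a differentiable function is constant on an open set, its derivative vanishes -/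
lemma deriv_const_on {s : Set ℝ} (hs : IsOpen s) {f : ℝ → ℝ} {k f' t : ℝ} (ht : t ∈ s)
    (h : ∀ t ∈ s, f t = k) (hf : HasDerivAt f f' t) : f' = 0 := by
  have h1 : f =ᶠ[𝓝 t] fun _ => k := by
    filter_upwards [hs.mem_nhds ht] with x hx using h x hx
  exact hf.unique ((hasDerivAt_const t k).congr_of_eventuallyEq h1)

lemma ev_bdd {s : Set ℝ} (hs : IsOpen s) (h0 : (0:ℝ) ∈ s) {f : ℝ → E n} (hf : ContinuousOn f s) :
    ∃ M > 0, ∀ᶠ t in 𝓝[>] (0:ℝ), ‖f t‖ ≤ M := by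
  refine ⟨‖f 0‖ + 1, by positivity, ?_⟩
  have h := (hf.continuousAt (hs.mem_nhds h0)).norm.eventually (gt_mem_nhds (lt_add_one ‖f 0‖))
  filter_upwards [h.filter_mono nhdsWithin_le_nhds] with t ht using ht.le

/-- decomposition of a null vector with respect to a frame -/
lemma frame_lem (c c1 N u : E n) (h00 : mink c c = 0) (h01 : mink c c1 = 0) (h11 : mink c1 c1 = 1)
    (hN0 : mink N c = -1) (hN1 : mink N c1 = 0) (hNN : mink N N = 0) (hu : mink u u = 0) :
    ∃ w : E n, u = (-(mink N u)) • c + mink c1 u • c1 - mink c u • N + w ∧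
      ‖w‖^2 ≤ ‖c + N‖^2 * (2 * mink c u * mink N u - (mink c1 u)^2) := by
  refine ⟨u - ((-(mink N u)) • c + mink c1 u • c1 - mink c u • N), by abel, ?_⟩
  have hv : mink (c + N) (c + N) = -2 := by
    simp only [mink_add_left, mink_add_right, h00, hN0, hNN, mink_comm c N]; norm_num
  have h1c := mink_comm c1 c
  have hcN := mink_comm c N
  have h1N := mink_comm c1 N
  have huc := mink_comm u c
  have hu1 := mink_comm u c1
  have huN := mink_comm u N
  refine (timelike_bound _ _ hv ?_).trans (le_of_eq ?_)
  · simp only [mink_add_left, mink_add_right, mink_sub_left, mink_smul_left, h00, h01, h11, hN0,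
      hN1, hNN, h1c, hcN, h1N, huc, huN]
    ring
  · congr 1
    simp only [mink_add_left, mink_add_right, mink_sub_left, mink_sub_right, mink_smul_left,
      mink_smul_right, h00, h01, h11, hN0, hN1, hNN, h1c, hcN, h1N, huc, hu1, huN, hu]
    ring

lemma le_of_sq_le_sq₀ {a b : ℝ} (h : a^2 ≤ b^2) (hb : 0 ≤ b) : a ≤ b :=
  (abs_le_of_sq_le_sq' h hb).2

set_option maxHeartbeats 4000000 in
/-- Theorem 5.2: at a second-order pole, every λ-Darboux transform with
1−2λ ≥ 0, λ ≠ 0, converges to the original curve. -/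
theorem stmt14 {n : ℕ} (ε b : ℝ) (hε : 0 < ε) (hb : 0 < b)
    (c : ℝ → E n) (hc : ContDiffOn ℝ (⊤ : ℕ∞) c (Set.Ioo (-ε) b))
    (hcnull : ∀ t ∈ Set.Ioo (-ε) b, mink (c t) (c t) = 0)
    (hcne : ∀ t ∈ Set.Ioo (-ε) b, c t ≠ 0)
    (hcreg : ∀ t ∈ Set.Ioo (-ε) b, mink (deriv c t) (deriv c t) = 1)
    (lam : ℝ) (hlam : lam ≠ 0) (hlam2 : 2 * lam ≤ 1)
    (ch : ℝ → E n)
    (hchne : ∀ t ∈ Set.Ioo (0:ℝ) b, ch t ≠ 0)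
    (hchnull : ∀ t ∈ Set.Ioo (0:ℝ) b, mink (ch t) (ch t) = 0)
    (hch : ∀ t ∈ Set.Ioo (0:ℝ) b, HasDerivAt ch
      ((-(lam / t ^ 2)) •
        (mink (c t) (ch t) • deriv c t - mink (deriv c t) (ch t) • c t)) t) :
    ∃ r : ℝ → ℝ, (∀ t ∈ Set.Ioo (0:ℝ) b, r t ≠ 0) ∧
      Tendsto (fun t : ℝ => r t • ch t) (𝓝[>] 0) (𝓝 (c 0)) := by

  set I := Set.Ioo (-ε) b with hI
  have hIo : IsOpen I := isOpen_Ioo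
  have h0I : (0:ℝ) ∈ I := ⟨by linarith, hb⟩
  have step : ∀ f : ℝ → E n, ContDiffOn ℝ (⊤ : ℕ∞) f I → ContDiffOn ℝ (⊤ : ℕ∞) (deriv f) I :=
    fun f hf => hf.deriv_of_isOpen hIo (by simp)
  have der : ∀ f : ℝ → E n, ContDiffOn ℝ (⊤ : ℕ∞) f I → ∀ t ∈ I, HasDerivAt f (deriv f t) t :=
    fun f hf t ht => ((hf.contDiffAt (hIo.mem_nhds ht)).differentiableAt (by simp)).hasDerivAt
  obtain ⟨c1, hc1⟩ : ∃ c1, c1 = deriv c := ⟨_, rfl⟩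
  rw [← hc1] at hcreg hch
  have sc1 : ContDiffOn ℝ (⊤ : ℕ∞) c1 I := hc1 ▸ step c hc
  obtain ⟨c2, hc2⟩ : ∃ c2, c2 = deriv c1 := ⟨_, rfl⟩
  have sc2 : ContDiffOn ℝ (⊤ : ℕ∞) c2 I := hc2 ▸ step c1 sc1
  obtain ⟨N, hN⟩ : ∃ N : ℝ → E n, N = fun t => c2 t + (mink (c2 t) (c2 t) / 2) • c t := ⟨_, rfl⟩
  have sN : ContDiffOn ℝ (⊤ : ℕ∞) N I := by
    rw [hN]; exact sc2.add (((contDiffOn_mink sc2 sc2).div_const 2).smul hc)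
  obtain ⟨N1, hN1⟩ : ∃ N1, N1 = deriv N := ⟨_, rfl⟩
  have sN1 : ContDiffOn ℝ (⊤ : ℕ∞) N1 I := hN1 ▸ step N sN
  have dc : ∀ t ∈ I, HasDerivAt c (c1 t) t := hc1 ▸ der c hc
  have dc1 : ∀ t ∈ I, HasDerivAt c1 (c2 t) t := hc2 ▸ der c1 sc1
  have dN : ∀ t ∈ I, HasDerivAt N (N1 t) t := hN1 ▸ der N sN
  have m01 : ∀ t ∈ I, mink (c t) (c1 t) = 0 := fun t ht => by
    have := deriv_const_on hIo ht hcnull ((dc t ht).mink' (dc t ht))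
    rw [mink_comm (c1 t)] at this; linarith
  have m02 : ∀ t ∈ I, mink (c2 t) (c t) = -1 := fun t ht => by
    have := deriv_const_on hIo ht m01 ((dc t ht).mink' (dc1 t ht))
    rw [hcreg t ht] at this
    rw [mink_comm]; linarith
  have m12 : ∀ t ∈ I, mink (c2 t) (c1 t) = 0 := fun t ht => by
    have := deriv_const_on hIo ht hcreg ((dc1 t ht).mink' (dc1 t ht))
    rw [mink_comm (c1 t)] at this; linarith
  have mN0 : ∀ t ∈ I, mink (N t) (c t) = -1 := fun t ht => by
    rw [hN]; simp only [mink_add_left, mink_smul_left, m02 t ht, hcnull t ht]; ring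
  have mN1 : ∀ t ∈ I, mink (N t) (c1 t) = 0 := fun t ht => by
    rw [hN]; simp only [mink_add_left, mink_smul_left, m12 t ht, m01 t ht]; ring
  have mNN : ∀ t ∈ I, mink (N t) (N t) = 0 := fun t ht => by
    rw [hN]
    simp only [mink_add_left, mink_add_right, mink_smul_left, mink_smul_right, m02 t ht,
      hcnull t ht, mink_comm (c t) (c2 t)]
    ring
  -- bounds
  obtain ⟨M, hM0, τ, hτ, hτb, hMc, hMc1, hMN, hMN1, hMc2⟩ : ∃ M > 0, ∃ τ > 0, τ ≤ b ∧
      (∀ t ∈ Ioo 0 τ, ‖c t‖ ≤ M) ∧ (∀ t ∈ Ioo 0 τ, ‖c1 t‖ ≤ M) ∧ (∀ t ∈ Ioo 0 τ, ‖N t‖ ≤ M) ∧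
      (∀ t ∈ Ioo 0 τ, ‖N1 t‖ ≤ M) ∧ (∀ t ∈ Ioo 0 τ, ‖c2 t‖ ≤ M) := by
    obtain ⟨M1, p1, h1⟩ := ev_bdd hIo h0I hc.continuousOn
    obtain ⟨M2, p2, h2⟩ := ev_bdd hIo h0I sc1.continuousOn
    obtain ⟨M3, p3, h3⟩ := ev_bdd hIo h0I sN.continuousOn
    obtain ⟨M4, p4, h4⟩ := ev_bdd hIo h0I sN1.continuousOn
    obtain ⟨M5, p5, h5⟩ := ev_bdd hIo h0I sc2.continuousOn
    obtain ⟨τ, hτ, h⟩ := ev_ex (h1.and (h2.and (h3.and (h4.and h5))))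
    refine ⟨M1 + M2 + M3 + M4 + M5, by positivity, min τ b, lt_min hτ hb, min_le_right _ _,
      ?_, ?_, ?_, ?_, ?_⟩ <;>
    · intro t ht
      obtain ⟨q1, q2, q3, q4, q5⟩ := h t ⟨ht.1, ht.2.trans_le (min_le_left _ _)⟩
      linarith
  have subb : ∀ t ∈ Ioo 0 τ, t ∈ Ioo 0 b := fun t ht => ⟨ht.1, ht.2.trans_le hτb⟩
  have subI : ∀ t ∈ Ioo 0 τ, t ∈ I := fun t ht =>
    ⟨by linarith [ht.1], ht.2.trans_le hτb⟩
  obtain ⟨x, hx⟩ : ∃ x : ℝ → ℝ, x = fun t => mink (c t) (ch t) := ⟨_, rfl⟩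
  obtain ⟨y, hy⟩ : ∃ y : ℝ → ℝ, y = fun t => mink (c1 t) (ch t) := ⟨_, rfl⟩
  obtain ⟨z, hz⟩ : ∃ z : ℝ → ℝ, z = fun t => mink (N t) (ch t) := ⟨_, rfl⟩
  have dec : ∀ t ∈ Ioo 0 τ, ∃ w : E n, ch t = (-(z t)) • c t + y t • c1 t - x t • N t + w ∧
      ‖w‖^2 ≤ (2*M)^2 * (2 * x t * z t - (y t)^2) ∧ (y t)^2 ≤ 2 * x t * z t := by
    intro t ht
    obtain ⟨w, hw1, hw2⟩ := frame_lem (c t) (c1 t) (N t) (ch t) (hcnull t (subI t ht))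
      (m01 t (subI t ht)) (hcreg t (subI t ht)) (mN0 t (subI t ht)) (mN1 t (subI t ht))
      (mNN t (subI t ht)) (hchnull t (subb t ht))
    have hx' : mink (c t) (ch t) = x t := by rw [hx]
    have hy' : mink (c1 t) (ch t) = y t := by rw [hy]
    have hz' : mink (N t) (ch t) = z t := by rw [hz]
    rw [hx', hy', hz'] at hw1 hw2
    have hnn : 0 ≤ 2 * x t * z t - (y t)^2 := by
      by_contra hneg
      push Not at hneg
      have h1 : ‖c t + N t‖^2 * (2 * x t * z t - (y t)^2) ≥ 0 := le_trans (sq_nonneg _) hw2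
      have h2 : ‖c t + N t‖ ^ 2 = 0 := by nlinarith [sq_nonneg ‖c t + N t‖]
      have h3 : c t + N t = 0 := by simpa using h2
      have h4 : mink (c t + N t) (c t) = -1 := by
        rw [mink_add_left, hcnull t (subI t ht), mN0 t (subI t ht)]; norm_num
      rw [h3] at h4
      simp [mink] at h4
    refine ⟨w, hw1, hw2.trans ?_, by linarith⟩
    have : ‖c t + N t‖ ≤ 2 * M := (norm_add_le _ _).trans (by linarith [hMc t ht, hMN t ht])
    gcongr
  have hxz : ∀ t ∈ Ioo 0 τ, 0 ≤ x t * z t := fun t ht => by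
    obtain ⟨w, -, -, h⟩ := dec t ht
    nlinarith [sq_nonneg (y t)]
  have hchb : ∀ t ∈ Ioo 0 τ, ‖ch t‖ ≤ (6 * M) * |x t + z t| := by
    intro t ht
    obtain ⟨w, h1, h2, h3⟩ := dec t ht
    have h4 := hxz t ht
    have hxa : |x t| ≤ |x t + z t| := sq_le_sq.1 (by nlinarith [sq_nonneg (z t)])
    have hza : |z t| ≤ |x t + z t| := sq_le_sq.1 (by nlinarith [sq_nonneg (x t)])
    have hya : |y t| ≤ |x t + z t| := sq_le_sq.1 (by nlinarith [sq_nonneg (x t), sq_nonneg (z t)])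
    have hwa : ‖w‖ ≤ (2*M) * |x t + z t| := by
      apply le_of_sq_le_sq₀ _ (by positivity)
      rw [mul_pow, sq_abs]
      refine h2.trans ?_
      gcongr
      nlinarith [sq_nonneg (x t), sq_nonneg (z t), sq_nonneg (y t)]
    calc ‖ch t‖ = ‖(-(z t)) • c t + y t • c1 t - x t • N t + w‖ := by rw [← h1]
      _ ≤ ‖(-(z t)) • c t‖ + ‖y t • c1 t‖ + ‖x t • N t‖ + ‖w‖ :=
        (norm_add_le _ _).trans (by gcongr; exact (norm_sub_le _ _).trans (by gcongr; exact norm_add_le _ _))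
      _ = |z t| * ‖c t‖ + |y t| * ‖c1 t‖ + |x t| * ‖N t‖ + ‖w‖ := by
        simp only [norm_smul, norm_neg, Real.norm_eq_abs, abs_neg]
      _ ≤ |x t + z t| * M + |x t + z t| * M + |x t + z t| * M + (2*M) * |x t + z t| := by
        have := hMc t ht
        have := hMc1 t ht
        have := hMN t ht
        gcongr
      _ ≤ _ := by nlinarith [mul_nonneg hM0.le (abs_nonneg (x t + z t))]
  have hne : ∀ t ∈ Ioo 0 τ, x t + z t ≠ 0 := by
    intro t ht h
    have := hchb t ht
    rw [h] at this
    simp at this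
    exact hchne t (subb t ht) this
  -- derivatives
  have dx : ∀ t ∈ Ioo 0 τ, HasDerivAt x (y t) t := by
    intro t ht
    have hi := subI t ht
    have := (dc t hi).mink' (hch t (subb t ht))
    rw [hx, hy]
    refine this.congr_deriv ?_
    simp only [mink_smul_right, mink_sub_right, m01 t hi, hcnull t hi]; ring
  have dy : ∀ t ∈ Ioo 0 τ, HasDerivAt y (z t - mink (c2 t) (c2 t) / 2 * x t - lam / t^2 * x t) t := by
    intro t ht
    have hi := subI t ht
    have := (dc1 t hi).mink' (hch t (subb t ht))
    rw [hx, hy, hz]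
    refine this.congr_deriv ?_
    rw [hN]
    simp only [mink_add_left, mink_smul_left, mink_smul_right, mink_sub_right, hcreg t hi,
      mink_comm (c1 t) (c t), m01 t hi]
    ring
  have dz : ∀ t ∈ Ioo 0 τ, HasDerivAt z (mink (N1 t) (ch t) - lam / t^2 * y t) t := by
    intro t ht
    have hi := subI t ht
    have := (dN t hi).mink' (hch t (subb t ht))
    rw [hy, hz]
    refine this.congr_deriv ?_
    simp only [mink_smul_right, mink_sub_right, mN0 t hi, mN1 t hi]
    ring
  -- sign
  obtain ⟨σ, hσ2, hσ⟩ : ∃ σ : ℝ, σ^2 = 1 ∧ ∀ t ∈ Ioo 0 τ, 0 < σ * (x t + z t) := by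
    have hcont : ContinuousOn (fun t => x t + z t) (Ioo 0 τ) := fun t ht =>
      ((dx t ht).continuousAt.add (dz t ht).continuousAt).continuousWithinAt
    have hpre : IsPreconnected (Ioo 0 τ) := isPreconnected_Ioo
    by_cases hp : ∀ t ∈ Ioo 0 τ, 0 < x t + z t
    · exact ⟨1, by norm_num, fun t ht => by linarith [hp t ht]⟩
    · push Not at hp
      obtain ⟨s, hs, hsle⟩ := hp
      refine ⟨-1, by norm_num, fun t ht => ?_⟩
      by_contra hcon
      have ht0 : 0 ≤ x t + z t := by linarith
      obtain ⟨q, hq, hq0⟩ := hpre.intermediate_value hs ht hcont ⟨hsle, ht0⟩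
      exact hne q hq hq0
  have hσ1 : |σ| = 1 := by
    rw [← abs_one, ← sq_eq_sq_iff_abs_eq_abs]; linarith
  have hσx : ∀ t ∈ Ioo 0 τ, 0 ≤ σ * x t ∧ 0 ≤ σ * z t := by
    intro t ht
    have h1 := hσ t ht
    have h2 : 0 ≤ (σ * x t) * (σ * z t) := by
      have : (σ * x t) * (σ * z t) = σ^2 * (x t * z t) := by ring
      rw [this, hσ2]; linarith [hxz t ht]
    rcases mul_nonneg_iff.1 h2 with h | h
    · exact h
    · exfalso; linarith [h.1, h.2]
  -- shrink to τ ≤ 1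
  obtain ⟨ρ, hρ, hρτ, hρ1⟩ : ∃ ρ > 0, ρ ≤ τ ∧ ρ ≤ 1 :=
    ⟨min τ 1, by positivity, min_le_left _ _, min_le_right _ _⟩
  have subρ : ∀ t ∈ Ioo 0 ρ, t ∈ Ioo 0 τ := fun t ht => ⟨ht.1, ht.2.trans_le hρτ⟩
  have hmain : ∃ δ > 0, ∀ᶠ t in 𝓝[>] (0:ℝ), δ * (σ * x t / t) ≤ σ * z t * t := by
    refine ode_main (lam := lam) (C := M^2 + 6 * M^2) hlam hlam2 (by positivity) hρ
      (X := fun t => σ * x t / t) (Y := fun t => σ * y t) (Z := fun t => σ * z t * t)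
      (e1 := fun t => - (mink (c2 t) (c2 t) / 2 * (σ * x t)))
      (e2 := fun t => σ * (mink (N1 t) (ch t)) * t)
      ?_ ?_ ?_ ?_ ?_ ?_ ?_ ?_ ?_
    · exact fun t ht => div_nonneg (hσx t (subρ t ht)).1 ht.1.le
    · exact fun t ht => mul_nonneg (hσx t (subρ t ht)).2 ht.1.le
    · intro t ht
      have ht0 := ht.1
      have h1 := hσ t (subρ t ht)
      obtain ⟨h2, h3⟩ := hσx t (subρ t ht)
      have h4 : σ * x t * t ≤ σ * x t / t := by
        rw [le_div_iff₀ ht0, mul_assoc]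
        have : t * t ≤ 1 := by nlinarith [ht.2]
        nlinarith
      have : 0 < σ * (x t + z t) * t := by positivity
      nlinarith
    · intro t ht
      obtain ⟨w, -, -, h⟩ := dec t (subρ t ht)
      have ht0 := ht.1.ne'
      have : 2 * (σ * x t / t) * (σ * z t * t) = σ^2 * (2 * x t * z t) := by field_simp
      rw [this, mul_pow, hσ2]; linarith
    · intro t ht
      have ht0 := ht.1.ne'
      refine (((dx t (subρ t ht)).const_mul σ).div (hasDerivAt_id t) ht0).congr_deriv ?_
      simp only [id]
      field_simp
    · intro t ht
      have ht0 := ht.1.ne'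
      refine ((dy t (subρ t ht)).const_mul σ).congr_deriv ?_
      field_simp
      ring
    · intro t ht
      have ht0 := ht.1.ne'
      refine (((dz t (subρ t ht)).const_mul σ).mul (hasDerivAt_id t)).congr_deriv ?_
      simp only [id]
      field_simp
      ring
    · intro t ht
      have ht0 := ht.1
      obtain ⟨h2, h3⟩ := hσx t (subρ t ht)
      have hk : |mink (c2 t) (c2 t)| ≤ M^2 := by
        refine (mink_abs_le _ _).trans ?_
        rw [pow_two]
        have := hMc2 t (subρ t ht)
        gcongr
      have h4 : σ * x t ≤ σ * x t / t := by
        rw [le_div_iff₀ ht0]; nlinarith [ht.2]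
      have h5 : 0 ≤ σ * z t * t := mul_nonneg h3 ht0.le
      rw [abs_neg, abs_mul, abs_of_nonneg h2, abs_div, abs_two]
      calc |mink (c2 t) (c2 t)| / 2 * (σ * x t) ≤ (M^2) * (σ * x t) := by
            gcongr; linarith [abs_nonneg (mink (c2 t) (c2 t))]
        _ ≤ (M^2 + 6 * M^2) * (σ * x t / t + σ * z t * t) := by
            apply mul_le_mul <;> first | positivity | nlinarith [sq_nonneg M]
    · intro t ht
      have ht0 := ht.1
      obtain ⟨h2, h3⟩ := hσx t (subρ t ht)
      have hs := hσ t (subρ t ht)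
      have h4 : σ * x t * t ≤ σ * x t / t := by
        rw [le_div_iff₀ ht0, mul_assoc]
        have : t * t ≤ 1 := by nlinarith [ht.2]
        nlinarith
      have h6 : |x t + z t| = σ * (x t + z t) := by
        rw [← abs_of_pos hs, abs_mul, hσ1, one_mul]
      rw [abs_mul, abs_mul, hσ1, one_mul, abs_of_pos ht0]
      calc |mink (N1 t) (ch t)| * t ≤ (‖N1 t‖ * ‖ch t‖) * t := by gcongr; exact mink_abs_le _ _
        _ ≤ (M * ((6*M) * |x t + z t|)) * t := by
          have := hMN1 t (subρ t ht)
          have := hchb t (subρ t ht)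
          gcongr
        _ = (6 * M^2) * (σ * x t * t + σ * z t * t) := by rw [h6]; ring
        _ ≤ (M^2 + 6 * M^2) * (σ * x t / t + σ * z t * t) := by
          have h5 : 0 ≤ σ * z t * t := mul_nonneg h3 ht0.le
          have h7 : 0 ≤ σ * x t * t := mul_nonneg h2 ht0.le
          apply mul_le_mul <;> first | positivity | nlinarith [sq_nonneg M]
  obtain ⟨δ, hδ, hev⟩ := hmain
  classical
  refine ⟨fun t => if z t = 0 then 1 else -(z t)⁻¹, ?_, ?_⟩
  · intro t _
    simp only
    split_ifs with h
    · exact one_ne_zero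
    · exact neg_ne_zero.2 (inv_ne_zero h)
  have hclim : Tendsto c (𝓝[>] 0) (𝓝 (c 0)) :=
    (dc 0 h0I).continuousAt.tendsto.mono_left nhdsWithin_le_nhds
  have hbnd : Tendsto (fun t : ℝ => Real.sqrt (2 * (t^2/δ)) * M + t^2/δ * M + 2*M*Real.sqrt (2 * (t^2/δ)))
      (𝓝[>] 0) (𝓝 0) := by
    have : Continuous (fun t : ℝ => Real.sqrt (2 * (t^2/δ)) * M + t^2/δ * M + 2*M*Real.sqrt (2 * (t^2/δ))) := by
      fun_prop
    have h := this.tendsto 0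
    simp only [ne_eq, OfNat.ofNat_ne_zero, not_false_eq_true, zero_pow, zero_div, mul_zero,
      Real.sqrt_zero, zero_mul, add_zero] at h
    exact h.mono_left nhdsWithin_le_nhds
  have hdiff : Tendsto (fun t => (if z t = 0 then 1 else -(z t)⁻¹) • ch t - c t) (𝓝[>] 0) (𝓝 0) := by
    refine squeeze_zero_norm' ?_ hbnd
    filter_upwards [hev, ev_Ioo hρ] with t h1 ht
    have ht0 := ht.1
    have htτ := subρ t ht
    obtain ⟨h2, h3⟩ := hσx t htτ
    have hs := hσ t htτ
    have h4 : δ * (σ * x t) ≤ σ * z t * t^2 := by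
      have h5 := mul_le_mul_of_nonneg_right h1 ht0.le
      have h6 : δ * (σ * x t / t) * t = δ * (σ * x t) := by field_simp
      rw [h6] at h5
      linarith
    have hzpos : 0 < σ * z t := by
      rcases h3.eq_or_lt with h | h
      · rw [← h] at h4
        nlinarith
      · exact h
    have hz0 : z t ≠ 0 := by
      intro h; rw [h] at hzpos; simp at hzpos
    have hσ0 : σ ≠ 0 := by
      intro h; rw [h] at hzpos; simp at hzpos
    rw [if_neg hz0]
    obtain ⟨w, hw1, hw2, hw3⟩ := dec t htτ
    have hq0 : 0 ≤ x t / z t := by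
      rw [← mul_div_mul_left _ _ hσ0]; positivity
    have hq : x t / z t ≤ t^2/δ := by
      rw [← mul_div_mul_left _ _ hσ0, div_le_div_iff₀ hzpos hδ]; linarith
    have hz2 : 0 < (z t)^2 := by positivity
    have hyz : |y t / z t| ≤ Real.sqrt (2 * (t^2/δ)) := by
      apply Real.abs_le_sqrt
      calc (y t / z t)^2 = (y t)^2 / (z t)^2 := by rw [div_pow]
        _ ≤ (2 * x t * z t) / (z t)^2 := by gcongr
        _ = 2 * (x t / z t) := by field_simp
        _ ≤ _ := by gcongr
    have hwz : ‖(z t)⁻¹ • w‖ ≤ 2 * M * Real.sqrt (2 * (t^2/δ)) := by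
      apply le_of_sq_le_sq₀ _ (by positivity)
      rw [norm_smul, mul_pow, mul_pow _ (Real.sqrt _), Real.sq_sqrt (by positivity), norm_inv,
        inv_pow, Real.norm_eq_abs, sq_abs]
      calc ((z t)^2)⁻¹ * ‖w‖^2 ≤ ((z t)^2)⁻¹ * ((2*M)^2 * (2 * x t * z t)) := by
            gcongr
            refine hw2.trans ?_
            gcongr
            linarith [sq_nonneg (y t)]
        _ = (2*M)^2 * (2 * (x t / z t)) := by field_simp
        _ ≤ _ := by gcongr
    have heq : -(z t)⁻¹ • ch t - c t
        = -((y t / z t) • c1 t) + (x t / z t) • N t - (z t)⁻¹ • w := by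
      rw [hw1]
      have : (z t)⁻¹ * z t = 1 := inv_mul_cancel₀ hz0
      simp only [smul_add, smul_sub, smul_smul, smul_neg, neg_mul, mul_neg, neg_neg, this, div_eq_inv_mul,
        neg_smul, one_smul]
      abel
    rw [heq]
    calc _ ≤ ‖(y t / z t) • c1 t‖ + ‖(x t / z t) • N t‖ + ‖(z t)⁻¹ • w‖ := by
          refine (norm_sub_le _ _).trans ?_
          gcongr
          refine (norm_add_le _ _).trans ?_
          rw [norm_neg]
      _ ≤ _ := by
        rw [norm_smul, norm_smul, Real.norm_eq_abs, Real.norm_eq_abs, abs_of_nonneg hq0]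
        have := hMc1 t htτ
        have := hMN t htτ
        gcongr
  have := hdiff.add hclim
  simpa using this
end
end

section
/- Let ε,b > 0 and let c:(−ε,b) → ℝ^{n+2} be smooth with ⟨c(t),c(t)⟩ = 0, c(t) ≠ 0 and ⟨c′(t),c′(t)⟩ = 1 for all t. Let λ ∈ ℝ with 2λ ≤ 1, fix p ∈ (0,b), and let T:(0,b) → End(ℝ^{n+2}) be differentiable with T(p) = id and T′(t) = (λ/t²)·(T(t)∘(c(t)∧c′(t))) for all t ∈ (0,b). Then the curve t ↦ T(t)(c(t)) converges projectively as t → 0⁺: there exist nonzero reals r(t) and a nonzero vector x ∈ ℝ^{n+2} such that r(t)·T(t)(c(t)) → x as t → 0⁺. -/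
open scoped BigOperators Topology
open Filter Set MeasureTheory

noncomputable section

variable {n : ℕ}

lemma mono_of_deriv {f f' : ℝ → ℝ} {a b : ℝ} (hf : ∀ t ∈ Ioo a b, HasDerivAt f (f' t) t)
    (h : ∀ t ∈ Ioo a b, 0 ≤ f' t) : MonotoneOn f (Ioo a b) := by
  apply monotoneOn_of_deriv_nonneg (convex_Ioo a b)
  · exact fun t ht => (hf t ht).continuousAt.continuousWithinAt
  · rw [interior_Ioo]; exact fun t ht => (hf t ht).differentiableAt.differentiableWithinAt
  · rw [interior_Ioo]; intro t ht; rw [(hf t ht).deriv]; exact h t ht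

lemma stolz_upper {F F' h h' : ℝ → ℝ} {t1 l δ : ℝ} (ht1 : 0 < t1) (hδ : 0 < δ)
    (hF : ∀ t ∈ Ioo 0 t1, HasDerivAt F (F' t) t)
    (hh : ∀ t ∈ Ioo 0 t1, HasDerivAt h (h' t) t)
    (hneg : ∀ t ∈ Ioo 0 t1, h' t < 0)
    (htop : Tendsto h (𝓝[>] 0) atTop)
    (hl : Tendsto (fun t => F' t / h' t) (𝓝[>] 0) (𝓝 l)) :
    ∀ᶠ t in 𝓝[>] (0:ℝ), F t / h t < l + δ := by
  have h1 : ∀ᶠ t in 𝓝[>] (0:ℝ), F' t / h' t < l + δ / 2 :=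
    hl.eventually (gt_mem_nhds (by linarith))
  obtain ⟨t2, ht2, hsub⟩ := (mem_nhdsGT_iff_exists_Ioo_subset).1 h1
  have ht2 : 0 < t2 := ht2
  set s := min t1 t2 with hs
  have hs0 : 0 < s := lt_min ht1 ht2
  have hss : ∀ t ∈ Ioo 0 s, t ∈ Ioo 0 t1 ∧ t ∈ Ioo 0 t2 := fun t ht =>
    ⟨⟨ht.1, ht.2.trans_le (min_le_left _ _)⟩, ⟨ht.1, ht.2.trans_le (min_le_right _ _)⟩⟩
  have hm : MonotoneOn (fun t => F t - (l + δ / 2) * h t) (Ioo 0 s) := by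
    refine mono_of_deriv (f' := fun t => F' t - (l + δ/2) * h' t) ?_ ?_
    · intro t ht
      exact (hF t (hss t ht).1).sub ((hh t (hss t ht).1).const_mul _)
    · intro t ht
      have h2 : F' t / h' t < l + δ / 2 := hsub (hss t ht).2
      have h3 := hneg t (hss t ht).1
      rw [div_lt_iff_of_neg h3] at h2
      linarith
  set C := F (s/2) - (l + δ / 2) * h (s/2) with hC
  have e1 : ∀ᶠ t in 𝓝[>] (0:ℝ), t ∈ Ioo 0 (s/2) := Ioo_mem_nhdsGT (by linarith)
  filter_upwards [e1, htop.eventually_gt_atTop (max 0 (C / (δ/2)))] with t ht hht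
  have hpos : 0 < h t := (le_max_left _ _).trans_lt hht
  have hbig : C / (δ/2) < h t := (le_max_right _ _).trans_lt hht
  rw [div_lt_iff₀ (by linarith)] at hbig
  have := hm (a := t) ⟨ht.1, by linarith [ht.2]⟩ (b := s/2) ⟨by linarith, by linarith⟩ ht.2.le
  rw [div_lt_iff₀ hpos]
  simp only at this
  nlinarith

lemma stolz {F F' h h' : ℝ → ℝ} {t1 l : ℝ} (ht1 : 0 < t1)
    (hF : ∀ t ∈ Ioo 0 t1, HasDerivAt F (F' t) t)
    (hh : ∀ t ∈ Ioo 0 t1, HasDerivAt h (h' t) t)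
    (hneg : ∀ t ∈ Ioo 0 t1, h' t < 0)
    (htop : Tendsto h (𝓝[>] 0) atTop)
    (hl : Tendsto (fun t => F' t / h' t) (𝓝[>] 0) (𝓝 l)) :
    Tendsto (fun t => F t / h t) (𝓝[>] 0) (𝓝 l) := by
  rw [tendsto_order]
  constructor
  · intro a ha
    have := stolz_upper (F := fun t => - F t) (F' := fun t => - F' t) (l := -l) (δ := l - a) ht1
      (by linarith) (fun t ht => (hF t ht).neg) hh hneg htop (by simpa [neg_div] using hl.neg)
    filter_upwards [this] with t ht
    rw [neg_div] at ht; linarith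
  · intro a ha
    have := stolz_upper (δ := a - l) ht1 (by linarith) hF hh hneg htop hl
    filter_upwards [this] with t ht
    linarith

/-- asymptotic scale -/
noncomputable def Rsc (σ t : ℝ) : ℝ := if σ = 0 then (Real.log t ^ 2)⁻¹ else t ^ σ
noncomputable def ksc (σ : ℝ) : ℝ := if σ = 0 then 1/2 else 1 / (2 * σ ^ 2)

lemma ksc_ne (σ : ℝ) : ksc σ ≠ 0 := by
  unfold ksc; split_ifs with h
  · norm_num
  · positivity

lemma asym {σ t1 l : ℝ} (hσ : 0 ≤ σ) (ht1 : 0 < t1) {α g w : ℝ → ℝ}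
    (hα : ∀ t ∈ Ioo 0 t1, HasDerivAt α ((σ * α t + g t) / t) t)
    (hg : ∀ t ∈ Ioo 0 t1, HasDerivAt g ((- σ * g t + w t) / t) t)
    (hl : Tendsto (fun t => t ^ σ * (w t - σ * g t)) (𝓝[>] 0) (𝓝 l)) :
    Tendsto (fun t => Rsc σ t * α t) (𝓝[>] 0) (𝓝 (ksc σ * l)) := by
  wlog h1 : t1 < 1 generalizing t1
  · exact this (t1 := min t1 (1/2)) (by positivity)
      (fun t ht => hα t ⟨ht.1, ht.2.trans_le (min_le_left _ _)⟩)
      (fun t ht => hg t ⟨ht.1, ht.2.trans_le (min_le_left _ _)⟩)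
      ((min_le_right _ _).trans_lt (by norm_num))
  have eI : ∀ᶠ t in 𝓝[>] (0:ℝ), t ∈ Ioo 0 t1 := Ioo_mem_nhdsGT ht1
  rcases hσ.eq_or_lt with h0 | hpos
  · subst h0
    simp only [Rsc, ksc, if_true]
    have htop : Tendsto (fun t => - Real.log t) (𝓝[>] 0) atTop :=
      tendsto_neg_atBot_atTop.comp Real.tendsto_log_nhdsGT_zero
    have s1 : Tendsto (fun t => g t / (- Real.log t)) (𝓝[>] 0) (𝓝 (-l)) := by
      refine stolz (h' := fun t => - t⁻¹) ht1 hg ?_ ?_ htop ?_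
      · intro t ht; exact (Real.hasDerivAt_log ht.1.ne').neg
      · intro t ht; have := ht.1; simpa using this
      · refine hl.neg.congr' ?_
        filter_upwards [eI] with t ht
        have := ht.1
        simp; field_simp
    have s2 : Tendsto (fun t => α t / (Real.log t) ^ 2) (𝓝[>] 0) (𝓝 (1/2 * l)) := by
      refine stolz (h' := fun t => 2 * Real.log t * t⁻¹) ht1 hα ?_ ?_ ?_ ?_
      · intro t ht; exact ((Real.hasDerivAt_log ht.1.ne').fun_pow 2).congr_deriv (by simp)
      · intro t ht
        have h2 := Real.log_neg ht.1 (ht.2.trans h1)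
        have h3 : 0 < t⁻¹ := inv_pos.2 ht.1
        nlinarith
      · have := (tendsto_pow_atTop (α := ℝ) (n := 2) (by norm_num)).comp htop
        refine this.congr fun t => by simp
      · have := s1.mul_const (-1/2)
        rw [show 1/2 * l = -l * (-1/2) by ring]
        refine this.congr' ?_
        filter_upwards [eI] with t ht
        have := ht.1
        have h2 := (Real.log_neg ht.1 (ht.2.trans h1)).ne
        simp; field_simp
    refine s2.congr fun t => ?_
    rw [div_eq_mul_inv, mul_comm]
  · simp only [Rsc, ksc, if_neg hpos.ne']
    have rp : ∀ s : ℝ, 0 < s → Tendsto (fun t : ℝ => t ^ (-s)) (𝓝[>] 0) atTop := by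
      intro s hs
      exact tendsto_rpow_neg_nhdsGT_zero (by linarith)
    have s1 : Tendsto (fun t => g t / t ^ (-σ)) (𝓝[>] 0) (𝓝 (-l/σ)) := by
      refine stolz (h' := fun t => (-σ) * t ^ (-σ - 1)) ht1 hg ?_ ?_ (rp σ hpos) ?_
      · intro t ht; exact Real.hasDerivAt_rpow_const (Or.inl ht.1.ne')
      · intro t ht; have := Real.rpow_pos_of_pos ht.1 (-σ-1); nlinarith
      · refine (hl.neg.div_const σ).congr' ?_
        filter_upwards [eI] with t ht
        have := ht.1
        rw [Real.rpow_sub_one ht.1.ne', Real.rpow_neg ht.1.le]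
        have := Real.rpow_pos_of_pos ht.1 σ
        field_simp
        ring
    have s2 : Tendsto (fun t => (t ^ (-σ) * α t) / t ^ (-(2*σ))) (𝓝[>] 0) (𝓝 (1 / (2*σ^2) * l)) := by
      refine stolz (F' := fun t => t ^ (-σ) * (g t / t))
        (h' := fun t => (-(2*σ)) * t ^ (-(2*σ) - 1)) ht1 ?_ ?_ ?_ (rp (2*σ) (by linarith)) ?_
      · intro t ht
        refine ((Real.hasDerivAt_rpow_const (p := -σ) (Or.inl ht.1.ne')).fun_mul (hα t ht)).congr_deriv ?_
        have := ht.1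
        rw [Real.rpow_sub_one ht.1.ne']
        field_simp
        ring
      · intro t ht; exact Real.hasDerivAt_rpow_const (Or.inl ht.1.ne')
      · intro t ht; have := Real.rpow_pos_of_pos ht.1 (-(2*σ)-1); nlinarith
      · have := s1.mul_const (-1/(2*σ))
        rw [show 1 / (2*σ^2) * l = -l/σ * (-1/(2*σ)) by field_simp]
        refine this.congr' ?_
        filter_upwards [eI] with t ht
        have := ht.1
        rw [Real.rpow_sub_one ht.1.ne', show -(2*σ) = -σ + -σ by ring, Real.rpow_add ht.1]
        have := Real.rpow_pos_of_pos ht.1 (-σ)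
        field_simp
        ring
    refine s2.congr' ?_
    filter_upwards [eI] with t ht
    have := ht.1
    rw [show -(2*σ) = -σ + -σ by ring, Real.rpow_add ht.1, Real.rpow_neg ht.1.le]
    have := Real.rpow_pos_of_pos ht.1 (σ)
    field_simp

/-- the scalar ODE system -/
structure Sys {ι : Type} [Fintype ι] (σ lam t1 : ℝ) (m n γ : ι → ℝ → ℝ)
    (α g w : ℝ → ℝ) (q : ι → ℝ → ℝ) : Prop where
  hα : ∀ t ∈ Ioo 0 t1, HasDerivAt α ((σ * α t + g t) / t) t
  hg : ∀ t ∈ Ioo 0 t1, HasDerivAt g ((- σ * g t + w t) / t) t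
  hw : ∀ t ∈ Ioo 0 t1, HasDerivAt w (∑ i, q i t * γ i t) t
  hq : ∀ t ∈ Ioo 0 t1, ∀ i, HasDerivAt (q i)
    ((q i t + lam * ((g t + (1 + σ) * α t) * m i t - t * α t * n i t)) / t) t

lemma alg_ineq {σ a g w S R U D t : ℝ} (hσ : 0 ≤ σ)
    (hS : 0 ≤ S) (hD : 0 < D) (hU : D * |U| ≤ D / 2 * S + (1/4) * (a^2 + g^2))
    (hR : 32 * (t * R)^2 ≤ D / 2 * S) :
    0 ≤ (σ + 1/2) * (a^2 + 4 * g^2 + 32 * w^2 + D * S) +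
      (a * (σ * a + g) + 4 * g * (-σ * g + w) + 32 * w * (t * R) + D * (S + U)) := by
  have h1 : -(D * |U|) ≤ D * U := by
    have := neg_abs_le U
    nlinarith
  have h2 : 0 ≤ σ * (D * S) := by positivity
  have h3 : 0 ≤ σ * w^2 := by positivity
  have h4 : 0 ≤ σ * a^2 := by positivity
  nlinarith [sq_nonneg (a + 2 * g), sq_nonneg (g + 4 * w), sq_nonneg (w + 2 * (t * R)),
    mul_nonneg hD.le hS, sq_nonneg a, sq_nonneg g, sq_nonneg w]

lemma U_bound {ι : Type} [Fintype ι] {lam σ K D t α g : ℝ} {m n q : ι → ℝ} (hσ : 0 ≤ σ)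
    (hK : 0 ≤ K) (hD : 0 < D)
    (hm : ∀ i, |m i| ≤ K) (hn : ∀ i, |n i| ≤ K) (ht : 0 < t) (ht1 : t ≤ 1)
    (hDK : D * (Fintype.card ι * (|lam| * K * (2 + σ)) ^ 2) ≤ 1/4) :
    D * |∑ i, q i * (lam * ((g + (1 + σ) * α) * m i - t * α * n i))| ≤
      D / 2 * ∑ i, q i ^ 2 + (1/4) * (α^2 + g^2) := by
  set K' := |lam| * K * (2 + σ) with hK'
  have hK'0 : 0 ≤ K' := by positivity
  have hX : ∀ i, |lam * ((g + (1 + σ) * α) * m i - t * α * n i)| ≤ K' * (|g| + |α|) := by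
    intro i
    rw [abs_mul]
    have e1 : |(g + (1 + σ) * α) * m i| ≤ (|g| + (1 + σ) * |α|) * K := by
      rw [abs_mul]
      refine mul_le_mul ?_ (hm i) (abs_nonneg _) (by positivity)
      refine (abs_add_le _ _).trans ?_
      rw [abs_mul, abs_of_nonneg (by linarith : 0 ≤ 1 + σ)]
    have e2 : |t * α * n i| ≤ |α| * K := by
      rw [abs_mul, abs_mul, abs_of_pos ht]
      refine mul_le_mul ?_ (hn i) (abs_nonneg _) (by positivity)
      nlinarith [abs_nonneg α]
    have e3 := abs_sub ((g + (1 + σ) * α) * m i) (t * α * n i)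
    have e4 : |(g + (1 + σ) * α) * m i - t * α * n i| ≤ K * (2 + σ) * (|g| + |α|) := by
      have : 0 ≤ K * (1+σ) * |g| := by positivity
      nlinarith
    calc |lam| * _ ≤ |lam| * (K * (2 + σ) * (|g| + |α|)) :=
          mul_le_mul_of_nonneg_left e4 (abs_nonneg _)
      _ = _ := by rw [hK']; ring
  have hterm : ∀ i, |q i * (lam * ((g + (1 + σ) * α) * m i - t * α * n i))| ≤
      1/2 * q i ^ 2 + K' ^ 2 * (α^2 + g^2) := by
    intro i
    rw [abs_mul]
    have := hX i
    have h2 : |q i| * |lam * ((g + (1 + σ) * α) * m i - t * α * n i)| ≤ |q i| * (K' * (|g| + |α|)) :=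
      mul_le_mul_of_nonneg_left this (abs_nonneg _)
    refine h2.trans ?_
    have h3 : (K' * (|g| + |α|))^2 ≤ 2 * (K'^2 * (α^2+g^2)) := by
      rw [mul_pow, ← sq_abs α, ← sq_abs g]
      have : (|g| + |α|)^2 ≤ 2 * (|α|^2 + |g|^2) := by nlinarith [sq_nonneg (|g| - |α|)]
      nlinarith [sq_nonneg K']
    rw [← sq_abs (q i)]
    nlinarith [sq_nonneg (|q i| - K' * (|g| + |α|))]
  have hsum : |∑ i, q i * (lam * ((g + (1 + σ) * α) * m i - t * α * n i))| ≤
      1/2 * ∑ i, q i ^ 2 + Fintype.card ι * (K' ^ 2 * (α^2 + g^2)) := by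
    refine (Finset.abs_sum_le_sum_abs _ _).trans ((Finset.sum_le_sum fun i _ => hterm i).trans ?_)
    rw [Finset.sum_add_distrib, ← Finset.mul_sum]
    simp
  have := mul_le_mul_of_nonneg_left hsum hD.le
  have h5 : 0 ≤ α^2 + g^2 := by positivity
  nlinarith [mul_le_mul_of_nonneg_right hDK h5]

lemma R_bound {ι : Type} [Fintype ι] {K : ℝ} {γ q : ι → ℝ} (hγ : ∀ i, |γ i| ≤ K) :
    (∑ i, q i * γ i) ^ 2 ≤ (Fintype.card ι * K ^ 2) * ∑ i, q i ^ 2 := by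
  have h1 := Finset.sum_mul_sq_le_sq_mul_sq Finset.univ q γ
  have h2 : ∑ i, γ i ^ 2 ≤ Fintype.card ι * K ^ 2 := by
    have : ∀ i ∈ Finset.univ, γ i ^ 2 ≤ K ^ 2 := fun i _ => by
      rw [← sq_abs]; exact pow_le_pow_left₀ (abs_nonneg _) (hγ i) 2
    simpa using Finset.sum_le_sum this
  have h3 : 0 ≤ ∑ i, q i ^ 2 := Finset.sum_nonneg fun i _ => sq_nonneg _
  nlinarith

set_option maxHeartbeats 1000000 in
lemma main_est (ι : Type) [Fintype ι] (σ lam K t2 : ℝ) (hσ : 0 ≤ σ) (hK : 0 ≤ K) (ht2 : 0 < t2) :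
    ∃ t1, 0 < t1 ∧ t1 ≤ t2 ∧ ∃ C, 0 < C ∧ ∀ (m n γ : ι → ℝ → ℝ)
      (_ : ∀ t ∈ Ioo 0 t2, ∀ i, |m i t| ≤ K) (_ : ∀ t ∈ Ioo 0 t2, ∀ i, |n i t| ≤ K)
      (_ : ∀ t ∈ Ioo 0 t2, ∀ i, |γ i t| ≤ K)
      (α g w : ℝ → ℝ) (q : ι → ℝ → ℝ), Sys σ lam t2 m n γ α g w q →
      ∃ l, Tendsto (fun t => t ^ σ * (w t - σ * g t)) (𝓝[>] 0) (𝓝 l) ∧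
        ∀ t0 ∈ Ioo 0 t1, |l - t0 ^ σ * (w t0 - σ * g t0)| ≤
          C * √(α t0 ^ 2 + 4 * g t0 ^ 2 + 32 * w t0 ^ 2 + ∑ i, q i t0 ^ 2) * t0 ^ (σ + 1) := by
  obtain ⟨N, hN⟩ : ∃ N : ℝ, N = (Fintype.card ι : ℝ) := ⟨_, rfl⟩
  have hN0 : 0 ≤ N := by rw [hN]; positivity
  set D : ℝ := 1 / (4 * (N * (|lam| * K * (2 + σ)) ^ 2) + 1) with hDdef
  have hD : 0 < D := by positivity
  have hD1 : D ≤ 1 := by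
    rw [hDdef, div_le_one (by positivity)]
    have : 0 ≤ (N * (|lam| * K * (2 + σ)) ^ 2) := by positivity
    linarith
  have hDK : D * (N * (|lam| * K * (2 + σ)) ^ 2) ≤ 1/4 := by
    rw [hDdef, div_mul_eq_mul_div, div_le_iff₀ (by positivity)]
    linarith
  set M : ℝ := N * K ^ 2 with hM
  have hM0 : 0 ≤ M := by positivity
  set t3 : ℝ := D / (64 * M + 1) with ht3
  have ht30 : 0 < t3 := by positivity
  set t1 := min t2 (min 1 t3) with ht1
  have ht10 : 0 < t1 := by positivity
  have ht12 : t1 ≤ t2 := min_le_left _ _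
  have ht11 : t1 ≤ 1 := (min_le_right _ _).trans (min_le_left _ _)
  have ht13 : t1 ≤ t3 := (min_le_right _ _).trans (min_le_right _ _)
  refine ⟨t1, ht10, ht12, 2 * √(M / D) + 1, by positivity, ?_⟩
  intro m n γ hm hn hγ α g w q hS
  have hI : ∀ t ∈ Ioo 0 t1, t ∈ Ioo 0 t2 := fun t ht => ⟨ht.1, ht.2.trans_le ht12⟩
  set En : ℝ → ℝ := fun t => α t ^ 2 + 4 * g t ^ 2 + 32 * w t ^ 2 + D * ∑ i, q i t ^ 2 with hEn
  have hEn0 : ∀ t, 0 ≤ En t := fun t => by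
    have : 0 ≤ ∑ i, q i t ^ 2 := Finset.sum_nonneg fun i _ => sq_nonneg _
    simp only [hEn]; positivity
  have hmono : MonotoneOn (fun t => t ^ (2 * σ + 1) * En t) (Ioo 0 t1) := by
    refine mono_of_deriv (f' := fun t => 2 * (t ^ (2 * σ + 1) / t) *
      ((σ + 1/2) * (α t^2 + 4 * g t^2 + 32 * w t^2 + D * ∑ i, q i t ^ 2) +
      (α t * (σ * α t + g t) + 4 * g t * (-σ * g t + w t) + 32 * w t * (t * ∑ i, q i t * γ i t) +
       D * (∑ i, q i t ^ 2 +
        ∑ i, q i t * (lam * ((g t + (1 + σ) * α t) * m i t - t * α t * n i t)))))) ?_ ?_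
    · intro t ht
      have htp := ht.1
      have d1 := (hS.hα t (hI t ht)).fun_pow 2
      have d2 := ((hS.hg t (hI t ht)).fun_pow 2).const_mul 4
      have d3 := ((hS.hw t (hI t ht)).fun_pow 2).const_mul 32
      have d4 := (HasDerivAt.fun_sum (u := Finset.univ)
        fun i _ => (hS.hq t (hI t ht) i).fun_pow 2).const_mul D
      have d5 := (Real.hasDerivAt_rpow_const (p := 2 * σ + 1) (Or.inl htp.ne')).fun_mul
        (((d1.fun_add d2).fun_add d3).fun_add d4)
      refine d5.congr_deriv ?_
      rw [Real.rpow_sub_one htp.ne']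
      have e : ∑ i, ((2:ℕ):ℝ) * q i t ^ (2 - 1) *
          ((q i t + lam * ((g t + (1 + σ) * α t) * m i t - t * α t * n i t)) / t) =
          2 / t * (∑ i, q i t ^ 2 +
        ∑ i, q i t * (lam * ((g t + (1 + σ) * α t) * m i t - t * α t * n i t))) := by
        rw [← Finset.sum_add_distrib, Finset.mul_sum]
        refine Finset.sum_congr rfl fun i _ => ?_
        push_cast
        simp only [pow_one]
        field_simp
      rw [e]
      generalize ∑ i, q i t * (lam * ((g t + (1 + σ) * α t) * m i t - t * α t * n i t)) = U
      generalize ∑ i, q i t * γ i t = R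
      generalize ∑ i, q i t ^ 2 = S
      generalize t ^ (2 * σ + 1) = P
      push_cast
      simp only [pow_one]
      field_simp
    · intro t ht
      have htp := ht.1
      have ht' := hI t ht
      refine mul_nonneg (by positivity) (alg_ineq hσ (Finset.sum_nonneg fun i _ => sq_nonneg _) hD
        (U_bound hσ hK hD (hm t ht') (hn t ht') htp (ht.2.le.trans ht11) (hN ▸ hDK)) ?_)
      have hR := R_bound (q := fun i => q i t) (hγ t ht')
      have hS0 : 0 ≤ ∑ i, q i t ^ 2 := Finset.sum_nonneg fun i _ => sq_nonneg _
      rw [← hN, ← hM] at hR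
      have htt : t * (64 * M + 1) ≤ D := by
        rw [← le_div_iff₀ (by positivity)]; exact ht.2.le.trans ht13
      have ht1' : t ≤ 1 := ht.2.le.trans ht11
      have h64 : 64 * (t^2 * M) ≤ D := by
        have : t^2 * M ≤ t * M := by
          apply mul_le_mul_of_nonneg_right _ hM0; nlinarith
        nlinarith
      rw [mul_pow]
      have h6 := mul_le_mul_of_nonneg_left hR (sq_nonneg t)
      have h7 := mul_le_mul_of_nonneg_right h64 hS0
      nlinarith
  set F : ℝ → ℝ := fun t => t ^ σ * (w t - σ * g t) with hF
  have hFd : ∀ t ∈ Ioo 0 t1, HasDerivAt F (t ^ σ * ∑ i, q i t * γ i t) t := by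
    intro t ht
    have htp := ht.1
    refine ((Real.hasDerivAt_rpow_const (p := σ) (Or.inl htp.ne')).fun_mul
      ((hS.hw t (hI t ht)).fun_sub ((hS.hg t (hI t ht)).const_mul σ))).congr_deriv ?_
    rw [Real.rpow_sub_one htp.ne']
    field_simp
    ring
  -- bound of the derivative
  have hbd : ∀ t0 ∈ Ioo 0 t1, ∀ t ∈ Ioc 0 t0, |t ^ σ * ∑ i, q i t * γ i t| ≤
      √(M / D) * √(En t0) * t0 ^ (σ + 1/2) * (√t)⁻¹ := by
    intro t0 ht0 t ht
    have htp := ht.1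
    have h0p := ht0.1
    have htI : t ∈ Ioo 0 t1 := ⟨htp, ht.2.trans_lt ht0.2⟩
    have h1 := hmono htI ht0 ht.2
    simp only at h1
    have hR := R_bound (q := fun i => q i t) (hγ t (hI t htI))
    rw [← hN, ← hM] at hR
    have hq : D * ∑ i, q i t ^ 2 ≤ En t := by
      simp only [hEn]
      have : 0 ≤ α t ^ 2 + 4 * g t ^ 2 + 32 * w t ^ 2 := by positivity
      linarith
    apply abs_le_of_sq_le_sq _ (by positivity)
    have x1 : (t0 ^ (σ + 1/2)) ^ 2 = t0 ^ (2 * σ + 1) := by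
      rw [← Real.rpow_natCast, ← Real.rpow_mul h0p.le]; congr 1; push_cast; ring
    have x2 : (t ^ σ) ^ 2 * t = t ^ (2 * σ + 1) := by
      rw [Real.rpow_add_one htp.ne', ← Real.rpow_natCast, ← Real.rpow_mul htp.le]
      congr 2; push_cast; ring
    have x3 : (√t) ^ 2 = t := Real.sq_sqrt htp.le
    rw [mul_pow, mul_pow, mul_pow, mul_pow, Real.sq_sqrt (by positivity), Real.sq_sqrt (hEn0 t0),
      x1, inv_pow, x3, ← div_eq_mul_inv, le_div_iff₀ htp]
    calc (t ^ σ) ^ 2 * (∑ i, q i t * γ i t) ^ 2 * t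
        = t ^ (2 * σ + 1) * (∑ i, q i t * γ i t) ^ 2 := by rw [← x2]; ring
      _ ≤ t ^ (2 * σ + 1) * (M / D * En t) := by
          refine mul_le_mul_of_nonneg_left ?_ (by positivity)
          refine hR.trans ?_
          rw [div_mul_eq_mul_div, le_div_iff₀ hD]
          nlinarith
      _ = M / D * (t ^ (2 * σ + 1) * En t) := by ring
      _ ≤ M / D * (t0 ^ (2 * σ + 1) * En t0) := mul_le_mul_of_nonneg_left h1 (by positivity)
      _ = _ := by ring
  -- comparison
  have hcmp : ∀ t0 ∈ Ioo 0 t1, ∀ t ∈ Ioo 0 t0, ∀ s ∈ Ioo 0 t0, t ≤ s → |F t - F s| ≤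
      2 * (√(M / D) * √(En t0) * t0 ^ (σ + 1/2)) * (√s - √t) := by
    intro t0 ht0 t ht s hs hts
    set B := √(M / D) * √(En t0) * t0 ^ (σ + 1/2) with hB
    have hmem : ∀ u ∈ Ioo 0 t0, u ∈ Ioo 0 t1 := fun u hu => ⟨hu.1, hu.2.trans ht0.2⟩
    have p1 : MonotoneOn (fun u => 2 * B * √u + F u) (Ioo 0 t0) := by
      refine mono_of_deriv (fun u hu => (((Real.hasDerivAt_sqrt hu.1.ne').const_mul (2*B)).fun_add
        (hFd u (hmem u hu)))) ?_
      intro u hu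
      have := (abs_le.1 (hbd t0 ht0 u ⟨hu.1, hu.2.le⟩)).1
      have e : 2 * B * (1 / (2 * √u)) = B * (√u)⁻¹ := by
        have := Real.sqrt_pos.2 hu.1
        field_simp
      linarith
    have p2 : MonotoneOn (fun u => 2 * B * √u - F u) (Ioo 0 t0) := by
      refine mono_of_deriv (fun u hu => (((Real.hasDerivAt_sqrt hu.1.ne').const_mul (2*B)).fun_sub
        (hFd u (hmem u hu)))) ?_
      intro u hu
      have := (abs_le.1 (hbd t0 ht0 u ⟨hu.1, hu.2.le⟩)).2
      have e : 2 * B * (1 / (2 * √u)) = B * (√u)⁻¹ := by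
        have := Real.sqrt_pos.2 hu.1
        field_simp
      linarith
    have q1 := p1 ht hs hts
    have q2 := p2 ht hs hts
    simp only at q1 q2
    rw [abs_le]; constructor <;> linarith
  -- existence of the limit
  have hlim : ∃ l, Tendsto F (𝓝[>] 0) (𝓝 l) := by
    have ht0 : t1 / 2 ∈ Ioo 0 t1 := ⟨by linarith, by linarith⟩
    set B := √(M / D) * √(En (t1/2)) * (t1/2) ^ (σ + 1/2) with hB
    have hB0 : 0 ≤ B := by positivity
    have hmn : MonotoneOn (fun u => 2 * B * √u + F u) (Ioo 0 (t1/2)) := by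
      intro t ht s hs hts
      have := (abs_le.1 (hcmp _ ht0 t ht s hs hts)).2
      simp only; linarith
    have hp : t1/4 ∈ Ioo 0 (t1/2) := ⟨by linarith, by linarith⟩
    have := hmn.tendsto_nhdsWithin_Ioo_right ⟨_, hp⟩ (by
      refine ⟨F (t1/4) - 2 * B * √(t1/2), ?_⟩
      rintro _ ⟨u, hu, rfl⟩
      simp only
      have m1 : √(t1/4) ≤ √(t1/2) := Real.sqrt_le_sqrt (by linarith)
      have m2 : √u ≤ √(t1/2) := Real.sqrt_le_sqrt hu.2.le
      have m3 := Real.sqrt_nonneg u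
      have m4 := Real.sqrt_nonneg (t1/4)
      have k1 := mul_le_mul_of_nonneg_left m1 hB0
      have k2 := mul_le_mul_of_nonneg_left m2 hB0
      have k3 := mul_nonneg hB0 m3
      have k4 := mul_nonneg hB0 m4
      have k5 : 0 ≤ B * √(t1/2) := by positivity
      rcases le_total u (t1/4) with h | h
      · have := (abs_le.1 (hcmp _ ht0 u hu _ hp h)).1
        linarith
      · have := (abs_le.1 (hcmp _ ht0 _ hp u hu h)).2
        linarith)
    have hz : Tendsto (fun u : ℝ => 2 * B * √u) (𝓝[>] 0) (𝓝 0) := by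
      have : Tendsto (fun u : ℝ => 2 * B * √u) (𝓝 0) (𝓝 (2 * B * √0)) :=
        (continuous_const.mul Real.continuous_sqrt).tendsto 0
      simp only [Real.sqrt_zero, mul_zero] at this
      exact this.mono_left nhdsWithin_le_nhds
    exact ⟨_, (this.sub hz).congr fun u => by ring⟩
  obtain ⟨l, hl⟩ := hlim
  refine ⟨l, hl, ?_⟩
  intro t0 ht0
  have h0p := ht0.1
  set B := √(M / D) * √(En t0) * t0 ^ (σ + 1/2) with hB
  have hB0 : 0 ≤ B := by positivity
  have hcont : Tendsto F (𝓝[<] t0) (𝓝 (F t0)) :=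
    (hFd t0 ht0).continuousAt.tendsto.mono_left nhdsWithin_le_nhds
  have hstep : ∀ s ∈ Ioo 0 t0, |l - F s| ≤ 2 * B * √t0 := by
    intro s hs
    refine le_of_tendsto ((hl.sub_const (F s)).abs) ?_
    filter_upwards [Ioo_mem_nhdsGT hs.1] with t ht
    refine (hcmp t0 ht0 t ⟨ht.1, ht.2.trans hs.2⟩ s hs ht.2.le).trans ?_
    refine mul_le_mul_of_nonneg_left ?_ (by positivity)
    have := Real.sqrt_le_sqrt hs.2.le
    have := Real.sqrt_nonneg t
    linarith
  have hfin : |l - F t0| ≤ 2 * B * √t0 := by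
    refine le_of_tendsto ((hcont.const_sub l).abs) ?_
    filter_upwards [Ioo_mem_nhdsLT h0p] with s hs using hstep s hs
  refine hfin.trans ?_
  have e1 : √(En t0) ≤ √(α t0 ^ 2 + 4 * g t0 ^ 2 + 32 * w t0 ^ 2 + ∑ i, q i t0 ^ 2) := by
    apply Real.sqrt_le_sqrt
    simp only [hEn]
    have : 0 ≤ ∑ i, q i t0 ^ 2 := Finset.sum_nonneg fun i _ => sq_nonneg _
    nlinarith
  have e2 : t0 ^ (σ + 1/2) * √t0 = t0 ^ (σ + 1) := by
    rw [Real.sqrt_eq_rpow, ← Real.rpow_add h0p]; congr 1; ring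
  calc 2 * B * √t0 = 2 * √(M/D) * √(En t0) * (t0 ^ (σ + 1/2) * √t0) := by rw [hB]; ring
    _ = 2 * √(M/D) * √(En t0) * t0 ^ (σ + 1) := by rw [e2]
    _ ≤ _ := by
      refine mul_le_mul_of_nonneg_right ?_ (by positivity)
      refine mul_le_mul (by linarith) e1 (by positivity) (by positivity)

def eta (n : ℕ) (i : Fin (n+2)) : ℝ := if i = Fin.last (n + 1) then (-1 : ℝ) else 1

lemma eta_sq (n : ℕ) (i : Fin (n+2)) : eta n i * eta n i = 1 := by
  unfold eta; split_ifs <;> norm_num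

abbrev bs (n : ℕ) (i : Fin (n+2)) : E n := EuclideanSpace.single i (1:ℝ)

lemma mink_bs {n : ℕ} (x : E n) (i : Fin (n+2)) : mink x (bs n i) = eta n i * x i := by
  unfold mink eta
  rw [Finset.sum_eq_single i]
  · simp
  · intro j _ hj; simp [hj]
  · simp

lemma sum_bs {n : ℕ} (x : E n) : ∑ i, x i • bs n i = x := by
  ext j
  simp [Finset.sum_apply, Pi.single_apply]

lemma wedge_apply {n : ℕ} (v w x : E n) : wedge v w x = mink v x • w - mink w x • v := rfl

/-- mink as a linear form in the first variable -/
def mkL {n : ℕ} (y : E n) : E n →L[ℝ] ℝ := LinearMap.toContinuousLinearMap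
  { toFun := fun x => mink x y
    map_add' := fun a b => mink_add_left a b y
    map_smul' := fun a b => mink_smul_left a b y }

lemma mkL_apply {n : ℕ} (x y : E n) : mkL y x = mink x y := rfl

lemma coord_deriv {n : ℕ} {f : ℝ → E n} {f' : E n} {t : ℝ} (hf : HasDerivAt f f' t)
    (i : Fin (n+2)) : HasDerivAt (fun s => f s i) (f' i) t :=
  (EuclideanSpace.proj i : E n →L[ℝ] ℝ).hasFDerivAt.comp_hasDerivAt t hf

lemma mink_deriv {n : ℕ} {f g : ℝ → E n} {f' g' : E n} {t : ℝ} (hf : HasDerivAt f f' t)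
    (hg : HasDerivAt g g' t) :
    HasDerivAt (fun s => mink (f s) (g s)) (mink f' (g t) + mink (f t) g') t := by
  unfold mink
  refine (HasDerivAt.fun_sum (u := Finset.univ) fun i _ =>
    ((coord_deriv hf i).const_mul _).fun_mul (coord_deriv hg i)).congr_deriv ?_
  rw [← Finset.sum_add_distrib]

lemma deriv_zero_of_const {f : ℝ → ℝ} {f' k : ℝ} {a b t : ℝ} (ht : t ∈ Ioo a b)
    (h : ∀ s ∈ Ioo a b, f s = k) (hf : HasDerivAt f f' t) : f' = 0 := by
  have : f =ᶠ[𝓝 t] fun _ => k := by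
    filter_upwards [isOpen_Ioo.mem_nhds ht] with s hs using h s hs
  exact (hf.congr_of_eventuallyEq this.symm).unique (hasDerivAt_const t k)

lemma smooth_deriv {n : ℕ} {f : ℝ → E n} {a b : ℝ} (hf : ContDiffOn ℝ (⊤ : ℕ∞) f (Ioo a b)) :
    ContDiffOn ℝ (⊤ : ℕ∞) (deriv f) (Ioo a b) ∧ ∀ t ∈ Ioo a b, HasDerivAt f (deriv f t) t := by
  refine ⟨hf.deriv_of_isOpen isOpen_Ioo (by simp), fun t ht => ?_⟩
  exact ((hf.differentiableOn (by simp)).differentiableAt (isOpen_Ioo.mem_nhds ht)).hasDerivAt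

lemma T_surj {n : ℕ} {b lam p : ℝ} {c c1 : ℝ → E n} {T : ℝ → E n →L[ℝ] E n} (hTp : T p = 1)
    (hp : p ∈ Ioo 0 b)
    (hT : ∀ t ∈ Ioo (0:ℝ) b, HasDerivAt T ((lam / t ^ 2) • (T t * wedge (c t) (c1 t))) t) :
    ∀ t ∈ Ioo (0:ℝ) b, Function.Surjective (T t) := by
  intro t ht y
  set h : ℝ → E n := fun s => ∑ i, (eta n i * mink (T s (bs n i)) y) • T s (bs n i) with hh
  have hd : ∀ s ∈ Ioo 0 b, HasDerivAt h 0 s := by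
    intro s hs
    have hTi : ∀ i, HasDerivAt (fun s => T s (bs n i))
        ((lam / s^2) • ((eta n i * c s i) • T s (c1 s) - (eta n i * c1 s i) • T s (c s))) s := by
      intro i
      refine ((hT s hs).clm_apply (hasDerivAt_const s (bs n i))).congr_deriv ?_
      simp [wedge_apply, mink_bs]
    have := HasDerivAt.fun_sum (u := Finset.univ) fun i _ =>
      (((mkL y).hasFDerivAt.comp_hasDerivAt s (hTi i)).const_mul (eta n i)).fun_smul (hTi i)
    refine HasDerivAt.congr_deriv this ?_
    have S1 : ∀ x : E n, ∑ i, x i • T s (bs n i) = T s x := fun x => by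
      conv_rhs => rw [← sum_bs x]
      simp [map_sum]
    have S2 : ∀ x : E n, ∑ i, x i * mink (T s (bs n i)) y = mink (T s x) y := fun x => by
      rw [← mkL_apply, ← S1 x, map_sum]
      simp [mkL_apply]
    have key : ∀ i, (eta n i * (mkL y) (T s (bs n i))) •
          ((lam / s^2) • ((eta n i * c s i) • T s (c1 s) - (eta n i * c1 s i) • T s (c s))) +
        (eta n i * (mkL y) ((lam / s^2) • ((eta n i * c s i) • T s (c1 s) - (eta n i * c1 s i) • T s (c s)))) •
          T s (bs n i) =
        (lam / s^2) • ((c s i * mink (T s (bs n i)) y) • T s (c1 s)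
          - (c1 s i * mink (T s (bs n i)) y) • T s (c s)
          + mink (T s (c1 s)) y • (c s i • T s (bs n i))
          - mink (T s (c s)) y • (c1 s i • T s (bs n i))) := by
      intro i
      have e := eta_sq n i
      simp only [map_smul, map_sub, mkL_apply, smul_eq_mul]
      set a := T s (bs n i)
      set u := T s (c1 s)
      set v := T s (c s)
      simp only [smul_sub, smul_add, smul_smul]
      rw [show eta n i * mink a y * (lam / s ^ 2 * (eta n i * c s i)) =
        lam / s^2 * (c s i * mink a y) by linear_combination (mink a y * (lam/s^2) * c s i) * e,
        show eta n i * mink a y * (lam / s ^ 2 * (eta n i * c1 s i)) =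
        lam / s^2 * (c1 s i * mink a y) by linear_combination (mink a y * (lam/s^2) * c1 s i) * e,
        show eta n i * (lam / s ^ 2 * (eta n i * c s i * mink u y - eta n i * c1 s i * mink v y)) =
        lam / s^2 * (mink u y * c s i) - lam / s^2 * (mink v y * c1 s i) by
          linear_combination ((lam/s^2) * (c s i * mink u y - c1 s i * mink v y)) * e, sub_smul]
      abel
    refine (Finset.sum_congr rfl fun i _ => key i).trans ?_
    rw [← Finset.smul_sum, Finset.sum_sub_distrib, Finset.sum_add_distrib, Finset.sum_sub_distrib,
      ← Finset.sum_smul, ← Finset.sum_smul, ← Finset.smul_sum, ← Finset.smul_sum, S1, S1, S2, S2]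
    rw [show ∀ u v : E n, u - v + v - u = 0 from fun u v => by abel, smul_zero]
  have hconst : h t = h p := by
    refine isOpen_Ioo.is_const_of_deriv_eq_zero isPreconnected_Ioo
      (fun s hs => (hd s hs).differentiableAt.differentiableWithinAt)
      (fun s hs => (hd s hs).deriv) ht hp
  have hpv : h p = y := by
    simp only [hh, hTp]
    conv_rhs => rw [← sum_bs y]
    refine Finset.sum_congr rfl fun i _ => ?_
    simp only [one_apply_eq_self]
    rw [mink_comm, mink_bs, ← mul_assoc, eta_sq, one_mul]
  refine ⟨∑ i, (eta n i * mink (T t (bs n i)) y) • bs n i, ?_⟩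
  have hfin : T t (∑ i, (eta n i * mink (T t (bs n i)) y) • bs n i) = h t := by
    simp only [map_sum, map_smul, hh]
  rw [hfin, hconst, hpv]

lemma app_deriv {n : ℕ} {b lam : ℝ} {c c1 : ℝ → E n} {T : ℝ → E n →L[ℝ] E n}
    (hT : ∀ t ∈ Ioo (0:ℝ) b, HasDerivAt T ((lam / t ^ 2) • (T t * wedge (c t) (c1 t))) t)
    (φ : E n →L[ℝ] ℝ) {t : ℝ} (ht : t ∈ Ioo 0 b) {f : ℝ → E n} {f' : E n}
    (hf : HasDerivAt f f' t) :
    HasDerivAt (fun s => φ (T s (f s))) ((lam / t^2) * (mink (c t) (f t) * φ (T t (c1 t))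
      - mink (c1 t) (f t) * φ (T t (c t))) + φ (T t f')) t := by
  refine (φ.hasFDerivAt.comp_hasDerivAt t ((hT t ht).clm_apply hf)).congr_deriv ?_
  simp [wedge_apply]

lemma mk_sys {n : ℕ} {b lam σ t2 : ℝ} (hσ2 : σ ^ 2 = 1 - 2 * lam)
    {c c1 c2 c3 : ℝ → E n} {T : ℝ → E n →L[ℝ] E n}
    (hT : ∀ t ∈ Ioo (0:ℝ) b, HasDerivAt T ((lam / t ^ 2) • (T t * wedge (c t) (c1 t))) t)
    (ht2 : t2 ≤ b)
    (d0 : ∀ t ∈ Ioo (0:ℝ) b, HasDerivAt c (c1 t) t)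
    (d1 : ∀ t ∈ Ioo (0:ℝ) b, HasDerivAt c1 (c2 t) t)
    (d2 : ∀ t ∈ Ioo (0:ℝ) b, HasDerivAt c2 (c3 t) t)
    (m00 : ∀ t ∈ Ioo (0:ℝ) b, mink (c t) (c t) = 0)
    (m01 : ∀ t ∈ Ioo (0:ℝ) b, mink (c t) (c1 t) = 0)
    (m11 : ∀ t ∈ Ioo (0:ℝ) b, mink (c1 t) (c1 t) = 1)
    (m02 : ∀ t ∈ Ioo (0:ℝ) b, mink (c t) (c2 t) = -1)
    (m12 : ∀ t ∈ Ioo (0:ℝ) b, mink (c1 t) (c2 t) = 0)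
    (φ : E n →L[ℝ] ℝ) :
    Sys σ lam t2 (fun i t => mink (c t) (bs n i)) (fun i t => mink (c1 t) (bs n i))
      (fun i t => c3 t i)
      (fun t => φ (T t (c t)) / t)
      (fun t => φ (T t (c1 t)) - (1 + σ) * (φ (T t (c t)) / t))
      (fun t => lam * (φ (T t (c t)) / t) - φ (T t (c1 t)) + t * φ (T t (c2 t)))
      (fun i t => t * φ (T t (bs n i))) := by
  have hI : ∀ t ∈ Ioo 0 t2, t ∈ Ioo 0 b := fun t ht => ⟨ht.1, ht.2.trans_le ht2⟩
  have ha : ∀ t ∈ Ioo 0 t2, HasDerivAt (fun s => φ (T s (c s))) (φ (T t (c1 t))) t := by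
    intro t ht'
    have ht := hI t ht'
    refine (app_deriv hT φ ht (d0 t ht)).congr_deriv ?_
    rw [m00 t ht, mink_comm, m01 t ht]; ring
  have he : ∀ t ∈ Ioo 0 t2, HasDerivAt (fun s => φ (T s (c1 s)))
      (φ (T t (c2 t)) - lam / t^2 * φ (T t (c t))) t := by
    intro t ht'
    have ht := hI t ht'
    refine (app_deriv hT φ ht (d1 t ht)).congr_deriv ?_
    rw [m01 t ht, m11 t ht]; ring
  have hd : ∀ t ∈ Ioo 0 t2, HasDerivAt (fun s => φ (T s (c2 s)))
      (φ (T t (c3 t)) - lam / t^2 * φ (T t (c1 t))) t := by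
    intro t ht'
    have ht := hI t ht'
    refine (app_deriv hT φ ht (d2 t ht)).congr_deriv ?_
    rw [m02 t ht, m12 t ht]; ring
  have hα : ∀ t ∈ Ioo 0 t2, HasDerivAt (fun s => φ (T s (c s)) / s)
      (φ (T t (c1 t)) / t - φ (T t (c t)) / t^2) t := by
    intro t ht
    have := ht.1
    refine ((ha t ht).fun_div (hasDerivAt_id' t) this.ne').congr_deriv ?_
    field_simp
  refine ⟨?_, ?_, ?_, ?_⟩
  · intro t ht
    have := ht.1
    refine (hα t ht).congr_deriv ?_
    field_simp
    ring
  · intro t ht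
    have := ht.1
    refine ((he t ht).fun_sub ((hα t ht).const_mul (1+σ))).congr_deriv ?_
    have hl : lam = (1 - σ^2)/2 := by linarith
    rw [hl]
    field_simp
    ring
  · intro t ht
    have := ht.1
    refine ((((hα t ht).const_mul lam).fun_sub (he t ht)).fun_add
      ((hasDerivAt_id' t).fun_mul (hd t ht))).congr_deriv ?_
    have hs : ∑ i, t * φ (T t (bs n i)) * c3 t i = t * φ (T t (c3 t)) := by
      conv_rhs => rw [← sum_bs (c3 t)]
      simp only [map_sum, map_smul, Finset.mul_sum, smul_eq_mul]
      exact Finset.sum_congr rfl fun i _ => by ring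
    rw [hs]
    field_simp
    ring
  · intro t ht i
    have := ht.1
    refine ((hasDerivAt_id' t).fun_mul
      (app_deriv hT φ (hI t ht) (hasDerivAt_const t (bs n i)))).congr_deriv ?_
    simp only [map_zero, add_zero]
    field_simp
    ring

lemma Rsc_ne (σ : ℝ) : ∀ᶠ t in 𝓝[>] (0:ℝ), Rsc σ t / t ≠ 0 := by
  filter_upwards [Ioo_mem_nhdsGT (zero_lt_one : (0:ℝ) < 1)] with t ht
  refine div_ne_zero ?_ ht.1.ne'
  unfold Rsc; split_ifs
  · exact inv_ne_zero (pow_ne_zero _ (Real.log_neg ht.1 ht.2).ne)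
  · exact (Real.rpow_pos_of_pos ht.1 _).ne'

/-- Theorem 5.3: at a second-order pole, all λ-Calapso transforms with
1−2λ ≥ 0 converge. -/
theorem stmt15 {n : ℕ} (ε b : ℝ) (hε : 0 < ε) (hb : 0 < b)
    (c : ℝ → E n) (hc : ContDiffOn ℝ (⊤ : ℕ∞) c (Set.Ioo (-ε) b))
    (hcnull : ∀ t ∈ Set.Ioo (-ε) b, mink (c t) (c t) = 0)
    (hcne : ∀ t ∈ Set.Ioo (-ε) b, c t ≠ 0)
    (hcreg : ∀ t ∈ Set.Ioo (-ε) b, mink (deriv c t) (deriv c t) = 1)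
    (lam : ℝ) (hlam2 : 2 * lam ≤ 1)
    (p : ℝ) (hp : p ∈ Set.Ioo (0:ℝ) b)
    (T : ℝ → E n →L[ℝ] E n) (hTp : T p = 1)
    (hT : ∀ t ∈ Set.Ioo (0:ℝ) b,
      HasDerivAt T ((lam / t ^ 2) • (T t * wedge (c t) (deriv c t))) t) :
    ∃ x : E n, x ≠ 0 ∧ ∃ r : ℝ → ℝ, (∀ t ∈ Set.Ioo (0:ℝ) b, r t ≠ 0) ∧
      Tendsto (fun t : ℝ => r t • (T t) (c t)) (𝓝[>] 0) (𝓝 x) := by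
  
  obtain ⟨hc1, D0⟩ := smooth_deriv hc
  obtain ⟨hc2, D1⟩ := smooth_deriv hc1
  obtain ⟨hc3, D2⟩ := smooth_deriv hc2
  set c1 := deriv c with hc1def
  set c2 := deriv c1 with hc2def
  set c3 := deriv c2 with hc3def
  have hsub : ∀ t ∈ Ioo (0:ℝ) b, t ∈ Ioo (-ε) b := fun t ht => ⟨by linarith [ht.1], ht.2⟩
  have M01 : ∀ t ∈ Ioo (-ε) b, mink (c t) (c1 t) = 0 := by
    intro t ht
    have := deriv_zero_of_const ht hcnull (mink_deriv (D0 t ht) (D0 t ht))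
    rw [mink_comm] at this; linarith
  have M02 : ∀ t ∈ Ioo (-ε) b, mink (c t) (c2 t) = -1 := by
    intro t ht
    have := deriv_zero_of_const ht M01 (mink_deriv (D0 t ht) (D1 t ht))
    rw [hcreg t ht] at this; linarith
  have M12 : ∀ t ∈ Ioo (-ε) b, mink (c1 t) (c2 t) = 0 := by
    intro t ht
    have := deriv_zero_of_const ht hcreg (mink_deriv (D1 t ht) (D1 t ht))
    rw [mink_comm] at this; linarith
  have hbd : ∀ f : ℝ → E n, ContDiffOn ℝ (⊤ : ℕ∞) f (Ioo (-ε) b) →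
      ∃ K, ∀ t ∈ Icc 0 (b/2), ‖f t‖ ≤ K := fun f hf =>
    isCompact_Icc.exists_bound_of_continuousOn
      (hf.continuousOn.mono fun t ht => ⟨by linarith [ht.1], by linarith [ht.2]⟩)
  obtain ⟨K0, hK0⟩ := hbd c hc
  obtain ⟨K1, hK1⟩ := hbd c1 hc1
  obtain ⟨K3, hK3⟩ := hbd c3 hc3
  set K := max K0 (max K1 K3) with hKdef
  have hKK0 : K0 ≤ K := le_max_left _ _
  have hKK1 : K1 ≤ K := (le_max_left _ _).trans (le_max_right _ _)
  have hKK3 : K3 ≤ K := (le_max_right _ _).trans (le_max_right _ _)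
  have hK : 0 ≤ K := (norm_nonneg (c 0)).trans
    ((hK0 0 ⟨le_rfl, by linarith⟩).trans hKK0)
  have hIcc : ∀ t ∈ Ioo (0:ℝ) (b/2), t ∈ Icc 0 (b/2) := fun t ht => ⟨ht.1.le, ht.2.le⟩
  have hcoord : ∀ (x : E n) i, |x i| ≤ ‖x‖ := fun x i => by
    simpa using PiLp.norm_apply_le x i
  have hbs : ∀ (x : E n) i, |mink x (bs n i)| ≤ ‖x‖ := fun x i => by
    rw [mink_bs, abs_mul]
    have : |eta n i| = 1 := by unfold eta; split_ifs <;> simp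
    rw [this, one_mul]; exact hcoord x i
  set σ := √(1 - 2 * lam) with hσdef
  have hσ : 0 ≤ σ := Real.sqrt_nonneg _
  have hσ2 : σ ^ 2 = 1 - 2 * lam := Real.sq_sqrt (by linarith)
  obtain ⟨t1, ht1, ht12, C, hC, hmain⟩ :=
    main_est (Fin (n+2)) σ lam K (b/2) hσ hK (by linarith)
  have hsys := mk_sys (σ := σ) (t2 := b/2) (c2 := c2) (c3 := c3) hσ2 hT (by linarith)
    (fun t ht => D0 t (hsub t ht)) (fun t ht => D1 t (hsub t ht)) (fun t ht => D2 t (hsub t ht))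
    (fun t ht => hcnull t (hsub t ht)) (fun t ht => M01 t (hsub t ht))
    (fun t ht => hcreg t (hsub t ht))
    (fun t ht => M02 t (hsub t ht)) (fun t ht => M12 t (hsub t ht))
  have hest := fun φ => hmain _ _ _
    (fun t ht i => (hbs (c t) i).trans ((hK0 t (hIcc t ht)).trans hKK0))
    (fun t ht i => (hbs (c1 t) i).trans ((hK1 t (hIcc t ht)).trans hKK1))
    (fun t ht i => (hcoord (c3 t) i).trans ((hK3 t (hIcc t ht)).trans hKK3)) _ _ _ _ (hsys φ)
  choose l hl hl0 using hest
  have hconv : ∀ φ : E n →L[ℝ] ℝ, Tendsto (fun t => Rsc σ t / t * φ (T t (c t))) (𝓝[>] 0)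
      (𝓝 (ksc σ * l φ)) := by
    intro φ
    refine (asym hσ (by linarith : 0 < b/2) (hsys φ).hα (hsys φ).hg (hl φ)).congr fun t => ?_
    ring
  -- a functional with nonzero limit
  have hex : ∃ φ, l φ ≠ 0 := by
    set G : ℝ := √(32 + (n+2) * K^2) with hG
    set t0 := min (t1 / 2) (1 / (2 * (C * G + 1))) with ht0
    have hG0 : 0 ≤ G := Real.sqrt_nonneg _
    have h0p : 0 < t0 := by positivity
    have h01 : t0 ∈ Ioo 0 t1 := ⟨h0p, (min_le_left _ _).trans_lt (by linarith)⟩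
    have h0b : t0 ∈ Ioo 0 b := ⟨h0p, by linarith [h01.2]⟩
    have h0h : t0 ∈ Ioo 0 (b/2) := ⟨h0p, by linarith [h01.2]⟩
    have h02 : C * G * t0 < 1 := by
      have : t0 ≤ 1 / (2 * (C * G + 1)) := min_le_right _ _
      rw [le_div_iff₀ (by positivity)] at this
      nlinarith [mul_nonneg hC.le hG0]
    have hsurj := T_surj hTp hp hT t0 h0b
    have hinj : Function.Injective (T t0) :=
      (LinearMap.injective_iff_surjective (f := (T t0 : E n →ₗ[ℝ] E n))).2 hsurj
    set L := LinearEquiv.ofBijective (T t0 : E n →ₗ[ℝ] E n) ⟨hinj, hsurj⟩ with hL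
    set φ : E n →L[ℝ] ℝ := t0⁻¹ • (mkL (c t0)).comp
      (LinearMap.toContinuousLinearMap (L.symm : E n →ₗ[ℝ] E n)) with hφ
    have hφT : ∀ x, φ (T t0 x) = t0⁻¹ * mink x (c t0) := by
      intro x
      have : L.symm (T t0 x) = x := L.symm_apply_apply x
      simp [hφ, this, mkL_apply]
    refine ⟨φ, fun h => ?_⟩
    have := hl0 φ t0 h01
    rw [h] at this
    simp only [hφT, hcnull t0 (hsub t0 h0b), mink_comm _ (c t0), M01 t0 (hsub t0 h0b),
      M02 t0 (hsub t0 h0b)] at this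
    have e1 : t0 * (t0⁻¹ * (-1 : ℝ)) = -1 := by field_simp
    have e2 : ∀ z : ℝ, t0 * (t0⁻¹ * z) = z := fun z => by field_simp
    simp only [e2] at this
    have hs : ∑ i, mink (c t0) (bs n i) ^ 2 ≤ (n+2) * K^2 := by
      have : ∀ i ∈ Finset.univ, mink (c t0) (bs n i) ^ 2 ≤ K ^ 2 := fun i _ => by
        rw [← sq_abs]
        exact pow_le_pow_left₀ (abs_nonneg _)
          ((hbs (c t0) i).trans ((hK0 t0 (hIcc t0 h0h)).trans hKK0)) 2
      simpa using Finset.sum_le_sum this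
    have hpw := Real.rpow_pos_of_pos h0p σ
    have hle : t0 ^ σ ≤ C * G * t0 ^ (σ + 1) := by
      have hA : |0 - t0 ^ σ * (-1)| = t0 ^ σ := by
        rw [zero_sub, mul_neg_one, neg_neg, abs_of_pos hpw]
      rw [← hA]
      refine le_trans (le_of_eq ?_) (this.trans ?_)
      · congr 1; ring
      · refine mul_le_mul_of_nonneg_right (mul_le_mul_of_nonneg_left
          (Real.sqrt_le_sqrt ?_) hC.le) (by positivity)
        refine le_trans (le_of_eq ?_) (add_le_add_right hs 32)
        congr 1; ring
    rw [Real.rpow_add_one h0p.ne'] at hle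
    nlinarith
  obtain ⟨φ, hφ⟩ := hex
  set pr : Fin (n+2) → (E n →L[ℝ] ℝ) := fun i => EuclideanSpace.proj i with hpr
  set x : E n := ∑ i, (ksc σ * l (pr i)) • bs n i with hx
  have hlim : Tendsto (fun t => (Rsc σ t / t) • T t (c t)) (𝓝[>] 0) (𝓝 x) := by
    have := tendsto_finsetSum (Finset.univ : Finset (Fin (n+2)))
      fun i _ => (hconv (pr i)).smul_const (bs n i)
    refine this.congr fun t => ?_
    conv_rhs => rw [← sum_bs (T t (c t))]
    rw [Finset.smul_sum]
    refine Finset.sum_congr rfl fun i _ => ?_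
    rw [smul_smul]; rfl
  refine ⟨x, ?_, fun t => if Rsc σ t / t = 0 then 1 else Rsc σ t / t, ?_, ?_⟩
  · intro h0
    have h1 : Tendsto (fun t => φ ((Rsc σ t / t) • T t (c t))) (𝓝[>] 0) (𝓝 (φ x)) :=
      (φ.continuous.tendsto x).comp hlim
    have h2 := tendsto_nhds_unique h1 ((hconv φ).congr fun t => by simp)
    rw [h0, map_zero] at h2
    exact mul_ne_zero (ksc_ne σ) hφ h2.symm
  · intro t _
    dsimp only
    split_ifs with h
    · exact one_ne_zero
    · exact h
  · refine hlim.congr' ?_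
    filter_upwards [Rsc_ne σ] with t ht
    rw [if_neg ht]
end
end

section
/- Let m ≥ 1, let 𝒱 ⊆ ℝ^m, and let q ∈ ℝ^m be a cluster point of 𝒱. Let x, y ∈ ℝ^{n+2} be null and nonzero, let A:𝒱 → End(ℝ^{n+2}) satisfy A(v) → xy* as v → q within 𝒱, and let u:𝒱 → ℝ^{n+2} satisfy ⟨u(v),u(v)⟩ = 0 and ⟨u(v),y⟩ = −1 for all v ∈ 𝒱. Assume there is δ > 0 such that |u(v) − s·y| ≥ δ·|u(v)| for all v ∈ 𝒱 and all s ∈ ℝ (the projectivized points ⟨u(v)⟩ avoid a neighbourhood of ⟨y⟩). Then u is bounded in Euclidean norm on 𝒱, and A(v)(u(v)) → −x as v → q within 𝒱. -/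
open scoped BigOperators Topology
open Filter Set MeasureTheory

noncomputable section

variable {n : ℕ}

/-- A nonzero `x` is a projective accumulation point at `0` of a curve
`γ : (0,b) → ℝ^{n+2} ∖ {0}` if some sequence `tᵢ → 0⁺` in `(0,b)` and reals `rᵢ`
satisfy `rᵢ • γ (tᵢ) → x`. -/
def projAccum {n : ℕ} (b : ℝ) (γ : ℝ → E n) (x : E n) : Prop :=
  ∃ (ts : ℕ → ℝ) (rs : ℕ → ℝ), (∀ i, ts i ∈ Set.Ioo (0:ℝ) b) ∧
    Tendsto ts atTop (𝓝 0) ∧ Tendsto (fun i => rs i • γ (ts i)) atTop (𝓝 x)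

lemma mink_self_eq (z : E n) : mink z z = ‖z‖ ^ 2 - 2 * z (Fin.last (n + 1)) ^ 2 := by
  rw [EuclideanSpace.real_norm_sq_eq]
  unfold mink
  rw [Fin.sum_univ_castSucc, Fin.sum_univ_castSucc (fun i => z i ^ 2)]
  have : ∀ i : Fin (n + 1), (if i.castSucc = Fin.last (n + 1) then (-1 : ℝ) else 1) = 1 := by
    intro i
    rw [if_neg (Fin.castSucc_lt_last i).ne]
  simp only [this, if_true]
  have h2 : ∀ i : Fin (n + 1), 1 * z i.castSucc * z i.castSucc = z i.castSucc ^ 2 := by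
    intro i; ring
  simp only [h2]
  ring

lemma bound_aux (y w : E n) (hynull : mink y y = 0) (hy : y ≠ 0)
    (hw : mink w w = 0) (hwy : mink w y = -1) (δ : ℝ) (hδ : 0 < δ)
    (h : ∀ s : ℝ, δ * ‖w‖ ≤ ‖w - s • y‖) :
    ‖w‖ ≤ 2 / (δ ^ 2 * |y (Fin.last (n + 1))|) := by
  have hyl : y (Fin.last (n + 1)) ≠ 0 := by
    intro h0
    rw [mink_self_eq, h0] at hynull
    apply hy
    rw [← norm_eq_zero]
    nlinarith
  set b := y (Fin.last (n + 1)) with hb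
  set a := w (Fin.last (n + 1)) with ha
  have hz : ‖w - (a / b) • y‖ ^ 2 = 2 * (a / b) := by
    have h1 := mink_self_eq (w - (a / b) • y)
    have h2 : (w - (a / b) • y) (Fin.last (n + 1)) = 0 := by
      simp only [PiLp.sub_apply, PiLp.smul_apply, smul_eq_mul]
      rw [← hb, ← ha]
      field_simp
      ring
    have h3 : w - (a / b) • y = w + (-(a / b)) • y := by
      rw [neg_smul, sub_eq_add_neg]
    rw [h2] at h1
    have h4 : mink (w - (a / b) • y) (w - (a / b) • y) = 2 * (a / b) := by
      rw [h3]
      simp only [mink_add_left, mink_add_right, mink_smul_left, mink_smul_right]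
      rw [mink_comm y w, hw, hwy, hynull]
      ring
    linarith
  have h5 := pow_le_pow_left₀ (by positivity) (h (a / b)) 2
  rw [hz] at h5
  have hab : a / b ≤ ‖w‖ / |b| := by
    refine (le_abs_self _).trans ?_
    rw [abs_div]
    gcongr
    exact PiLp.norm_apply_le w (Fin.last (n + 1))
  have hbp : 0 < |b| := abs_pos.mpr hyl
  rw [le_div_iff₀ (by positivity)]
  rcases (norm_nonneg w).eq_or_lt with h0 | h0
  · rw [← h0]; norm_num
  · rw [le_div_iff₀ hbp] at hab
    have h6 : (δ * ‖w‖) ^ 2 * |b| ≤ 2 * ‖w‖ := by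
      have := mul_le_mul_of_nonneg_right h5 hbp.le
      linarith
    refine le_of_mul_le_mul_right ?_ h0
    nlinarith

/-- Lemma 5.5. -/
theorem stmt17 {n : ℕ} (m : ℕ) (hm : 1 ≤ m)
    (V : Set (Fin m → ℝ)) (q : Fin m → ℝ) (hq : ClusterPt q (Filter.principal V))
    (x y : E n) (hxnull : mink x x = 0) (hx : x ≠ 0)
    (hynull : mink y y = 0) (hy : y ≠ 0)
    (A : (Fin m → ℝ) → E n →L[ℝ] E n)
    (hA : Tendsto A (𝓝[V] q) (𝓝 (rankOne x y)))
    (u : (Fin m → ℝ) → E n)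
    (hunull : ∀ v ∈ V, mink (u v) (u v) = 0)
    (huy : ∀ v ∈ V, mink (u v) y = -1)
    (δ : ℝ) (hδ : 0 < δ)
    (havoid : ∀ v ∈ V, ∀ s : ℝ, δ * ‖u v‖ ≤ ‖u v - s • y‖) :
    (∃ R : ℝ, ∀ v ∈ V, ‖u v‖ ≤ R) ∧
    Tendsto (fun v => (A v) (u v)) (𝓝[V] q) (𝓝 (-x)) := by
  have hR : ∀ v ∈ V, ‖u v‖ ≤ 2 / (δ ^ 2 * |y (Fin.last (n + 1))|) := fun v hv =>
    bound_aux y (u v) hynull hy (hunull v hv) (huy v hv) δ hδ (havoid v hv)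
  refine ⟨⟨_, hR⟩, ?_⟩
  generalize 2 / (δ ^ 2 * |y (Fin.last (n + 1))|) = R at hR
  have h1 : Tendsto (fun v => ‖A v - rankOne x y‖ * R) (𝓝[V] q) (𝓝 0) := by
    simpa using (tendsto_iff_norm_sub_tendsto_zero.mp hA).mul_const R
  rw [tendsto_iff_norm_sub_tendsto_zero]
  refine squeeze_zero' (Eventually.of_forall fun v => norm_nonneg _) ?_ h1
  filter_upwards [self_mem_nhdsWithin] with v hv
  have h2 : rankOne x y (u v) = -x := by
    change mink (u v) y • x = -x
    rw [huy v hv, neg_smul, one_smul]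
  rw [← h2, ← ContinuousLinearMap.sub_apply]
  exact (ContinuousLinearMap.le_opNorm _ _).trans
    (mul_le_mul_of_nonneg_left (hR v hv) (norm_nonneg _))
end
end
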